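/- arXiv:2003.12134 — 7 statements merged into one kernel-verified Lean document; each statement's English description precedes it below -/
import Mathlib

section
/- Let {C_1, …, C_q} be a family of cycles in the complete graph G on V, each containing exactly one depot of D, whose vertex sets together cover V. Then there exists a family {C'_1, …, C'_{q'}} of at most q pairwise edge-disjoint cycles of G, each containing exactly one depot of D, whose vertex sets together cover V, and whose maximum cycle weight satisfies max_j w(C'_j) ≤ max_j w(C_j). -/
/-- The weight of a cycle represented by the list of its vertices in cyclic
order: the sum of the weights of its (cyclically) consecutive pairs. -/
def cycleWeight {V : Type} (w : V → V → ℝ) (l : List V) : ℝ :=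
  ((l.zip (l.rotate 1)).map fun p => w p.1 p.2).sum

/-- The edges of a cycle represented by the list of its vertices in cyclic
order, as unordered pairs. -/
def cycleEdges {V : Type} (l : List V) : List (Sym2 V) :=
  (l.zip (l.rotate 1)).map fun p => s(p.1, p.2)

/-!
Assign every vertex to one cycle through it, and let each cycle shortcut the non-depots that are
assigned elsewhere. By the triangle inequality no cycle becomes heavier, and two of the resulting
cycles can only meet in a depot, hence in at most one vertex, so the only edge they can share is the
loop at a depot. They share it only if both have shrunk to that depot, and this happens at most once
if the cycles to which no vertex is assigned are discarded.
-/

section Weight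

/-- The weight of the walk that starts at `a`, runs through the vertices of `l` in order and ends at
`b`. Closed walks `a, l, a` give the weight of the cycle `a :: l`; the endpoints are kept apart from
`l` so that vertices can be removed from `l` by induction. -/
def pathWeight {V M : Type*} [Add M] (w : V → V → M) : V → List V → V → M
  | a, [], b => w a b
  | a, x :: l, b => w a x + pathWeight w x l b

theorem pathWeight_eq_sum {V M : Type*} [AddMonoid M] (w : V → V → M) (a : V) (l : List V) (b : V) :
    pathWeight w a l b = (((a :: l).zip (l ++ [b])).map fun p => w p.1 p.2).sum := by
  induction l generalizing a with
  | nil => simp [pathWeight]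
  | cons x l ih => simp [pathWeight, ih x]

section Triangle

variable {V M : Type*} [AddCommMonoid M] [PartialOrder M] [IsOrderedAddMonoid M] {w : V → V → M}

theorem pathWeight_le_pathWeight_add (htri : ∀ u v x, w u x ≤ w u v + w v x) (a : V)
    (l : List V) (b c : V) :
    pathWeight w a l c ≤ pathWeight w a l b + w b c := by
  induction l generalizing a with
  | nil => exact htri a b c
  | cons x l ih =>
    simp only [pathWeight, add_assoc]
    exact add_le_add_right (ih x) _

theorem pathWeight_le_add_pathWeight (htri : ∀ u v x, w u x ≤ w u v + w v x) (a c : V)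
    (l : List V) (b : V) :
    pathWeight w a l b ≤ w a c + pathWeight w c l b := by
  cases l with
  | nil => exact htri a c b
  | cons x l =>
    simp only [pathWeight, ← add_assoc]
    exact add_le_add_left (htri a c x) _

theorem pathWeight_le_of_sublist (htri : ∀ u v x, w u x ≤ w u v + w v x)
    {l' l : List V} (h : l'.Sublist l) (a b : V) :
    pathWeight w a l' b ≤ pathWeight w a l b := by
  induction h generalizing a with
  | slnil => exact le_rfl
  | cons x _ ih => exact (ih a).trans (pathWeight_le_add_pathWeight htri a x _ b)
  | cons_cons x _ ih => exact add_le_add_right (ih x) _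

end Triangle

variable {V : Type} {w : V → V → ℝ}

theorem cycleWeight_cons (w : V → V → ℝ) (x : V) (l : List V) :
    cycleWeight w (x :: l) = pathWeight w x l x := by
  simp [cycleWeight, pathWeight_eq_sum]

theorem cycleWeight_le_cycleWeight_cons (htri : ∀ u v x, w u x ≤ w u v + w v x) (x : V)
    (l : List V) : cycleWeight w l ≤ cycleWeight w (x :: l) := by
  cases l with
  | nil =>
    have hloop : 0 ≤ w x x := le_add_iff_nonneg_left _ |>.1 (htri x x x)
    simpa [cycleWeight] using hloop
  | cons y l =>
    calc cycleWeight w (y :: l) = pathWeight w y l y := cycleWeight_cons w y l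
      _ ≤ pathWeight w y l x + w x y := pathWeight_le_pathWeight_add htri y l x y
      _ = w x y + pathWeight w y l x := add_comm _ _
      _ = cycleWeight w (x :: y :: l) := (cycleWeight_cons w x (y :: l)).symm

theorem cycleWeight_le_of_sublist (htri : ∀ u v x, w u x ≤ w u v + w v x) {l' l : List V}
    (h : l'.Sublist l) : cycleWeight w l' ≤ cycleWeight w l := by
  induction h with
  | slnil => exact le_rfl
  | cons x _ ih => exact ih.trans (cycleWeight_le_cycleWeight_cons htri x _)
  | cons_cons x h _ =>
    simpa only [cycleWeight_cons] using pathWeight_le_of_sublist htri h x x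

theorem cycleWeight_nonneg (htri : ∀ u v x, w u x ≤ w u v + w v x) (l : List V) :
    0 ≤ cycleWeight w l :=
  cycleWeight_le_of_sublist htri l.nil_sublist

theorem iSup_cycleWeight_le_of_sublist (htri : ∀ u v x, w u x ≤ w u v + w v x) {ι ι' : Type*}
    [Finite ι] {C : ι → List V} {C' : ι' → List V} (g : ι' → ι)
    (h : ∀ i, (C' i).Sublist (C (g i))) :
    ⨆ i, cycleWeight w (C' i) ≤ ⨆ i, cycleWeight w (C i) := by
  refine Real.iSup_le (fun i => ?_) (Real.iSup_nonneg fun i => cycleWeight_nonneg htri (C i))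
  calc cycleWeight w (C' i) ≤ cycleWeight w (C (g i)) := cycleWeight_le_of_sublist htri (h i)
    _ ≤ ⨆ i, cycleWeight w (C i) :=
      le_ciSup (f := fun i => cycleWeight w (C i)) (Set.finite_range _).bddAbove (g i)

end Weight

section Edges

variable {V : Type}

theorem mem_of_mem_cycleEdges {l : List V} {e : Sym2 V} {v : V} (he : e ∈ cycleEdges l)
    (hv : v ∈ e) : v ∈ l := by
  obtain ⟨⟨a, b⟩, hab, rfl⟩ := List.mem_map.1 he
  have hmem : a ∈ l ∧ b ∈ l := by simpa using List.of_mem_zip hab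
  rcases Sym2.mem_iff.1 hv with rfl | rfl
  exacts [hmem.1, hmem.2]

theorem eq_singleton_of_diag_mem_cycleEdges {l : List V} (hl : l.Nodup) {v : V}
    (h : s(v, v) ∈ cycleEdges l) : l = [v] := by
  have hvl : v ∈ l := mem_of_mem_cycleEdges h (Sym2.mem_mk_left v v)
  obtain ⟨i, hi, hedge⟩ := List.mem_iff_getElem.1 h
  have hi : i < l.length := by simpa [cycleEdges] using hi
  have hnext : l[i] = l[(i + 1) % l.length]'(Nat.mod_lt _ (by omega)) := by
    simp only [cycleEdges, List.getElem_map, List.getElem_zip, List.getElem_rotate] at hedge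
    exact Sym2.mk_isDiag_iff.1 (hedge ▸ Sym2.diag_isDiag v)
  have hfix : i = (i + 1) % l.length := hl.getElem_inj_iff.1 hnext
  have hlen : l.length = 1 := by
    rcases Nat.lt_or_ge (i + 1) l.length with hlt | hge
    · rw [Nat.mod_eq_of_lt hlt] at hfix
      omega
    · obtain rfl : i = 0 := by rwa [show i + 1 = l.length by omega, Nat.mod_self] at hfix
      omega
  obtain ⟨a, rfl⟩ := List.length_eq_one_iff.1 hlen
  rw [List.mem_singleton.1 hvl]

theorem disjoint_cycleEdges {l₁ l₂ : List V} (h₁ : l₁.Nodup) (h₂ : l₂.Nodup) (hne : l₁ ≠ l₂)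
    (hcommon : {v | v ∈ l₁ ∧ v ∈ l₂}.Subsingleton) :
    (cycleEdges l₁).Disjoint (cycleEdges l₂) := by
  intro e he₁ he₂
  induction e with | _ a b
  obtain rfl : a = b :=
    hcommon
      ⟨mem_of_mem_cycleEdges he₁ (Sym2.mem_mk_left a b),
        mem_of_mem_cycleEdges he₂ (Sym2.mem_mk_left a b)⟩
      ⟨mem_of_mem_cycleEdges he₁ (Sym2.mem_mk_right a b),
        mem_of_mem_cycleEdges he₂ (Sym2.mem_mk_right a b)⟩
  exact hne <| (eq_singleton_of_diag_mem_cycleEdges h₁ he₁).trans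
    (eq_singleton_of_diag_mem_cycleEdges h₂ he₂).symm

end Edges

section Shortcut

variable {V ι : Type*} [DecidableEq V] [DecidableEq ι]

/-- The closed walk `C j` after shortcutting repeated vertices and every vertex outside the depot
set `D` that the assignment `f` gives to another walk. Depots are kept whatever `f` assigns. -/
def shortcut (D : Finset V) (f : V → ι) (C : ι → List V) (j : ι) : List V :=
  (C j).dedup.filter fun v => v ∈ D ∨ f v = j

variable {D : Finset V} {f : V → ι} {C : ι → List V} {i j : ι}

theorem mem_shortcut {v : V} : v ∈ shortcut D f C j ↔ v ∈ C j ∧ (v ∈ D ∨ f v = j) := by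
  simp [shortcut]

theorem shortcut_sublist (D : Finset V) (f : V → ι) (C : ι → List V) (j : ι) :
    (shortcut D f C j).Sublist (C j) :=
  List.filter_sublist.trans (C j).dedup_sublist

theorem nodup_shortcut (D : Finset V) (f : V → ι) (C : ι → List V) (j : ι) :
    (shortcut D f C j).Nodup :=
  (C j).nodup_dedup.filter _

theorem shortcut_toFinset_inter (D : Finset V) (f : V → ι) (C : ι → List V) (j : ι) :
    (shortcut D f C j).toFinset ∩ D = (C j).toFinset ∩ D := by
  ext v
  simp only [Finset.mem_inter, List.mem_toFinset, mem_shortcut]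
  tauto

theorem mem_shortcut_self (hf : ∀ v, v ∈ C (f v)) (v : V) : v ∈ shortcut D f C (f v) :=
  mem_shortcut.2 ⟨hf v, .inr rfl⟩

theorem mem_depots_of_mem_shortcut_of_mem_shortcut (hij : i ≠ j) {v : V}
    (hi : v ∈ shortcut D f C i) (hj : v ∈ shortcut D f C j) : v ∈ D := by
  by_contra hv
  have hfi : f v = i := (mem_shortcut.1 hi).2.resolve_left hv
  have hfj : f v = j := (mem_shortcut.1 hj).2.resolve_left hv
  exact hij (hfi.symm.trans hfj)

theorem subsingleton_mem_shortcut_and_mem_shortcut (hi : ((C i).toFinset ∩ D).card ≤ 1)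
    (hij : i ≠ j) : {v | v ∈ shortcut D f C i ∧ v ∈ shortcut D f C j}.Subsingleton := by
  have hdepot : ∀ v, v ∈ shortcut D f C i → v ∈ shortcut D f C j → v ∈ (C i).toFinset ∩ D :=
    fun v hvi hvj => Finset.mem_inter.2 ⟨List.mem_toFinset.2 (mem_shortcut.1 hvi).1,
      mem_depots_of_mem_shortcut_of_mem_shortcut hij hvi hvj⟩
  intro u hu v hv
  exact Finset.card_le_one.1 hi u (hdepot u hu.1 hu.2) v (hdepot v hv.1 hv.2)

theorem injOn_shortcut (hf : ∀ v, v ∈ C (f v)) (hdep : ∀ j, ((C j).toFinset ∩ D).card ≤ 1) :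
    Set.InjOn (shortcut D f C) (Set.range f) := by
  rintro _ ⟨u, rfl⟩ _ ⟨v, rfl⟩ heq
  by_contra hne
  have hu : u ∈ shortcut D f C (f u) := mem_shortcut_self hf u
  have hv : v ∈ shortcut D f C (f v) := mem_shortcut_self hf v
  exact hne <| congrArg f <|
    subsingleton_mem_shortcut_and_mem_shortcut (hdep _) hne ⟨hu, heq ▸ hu⟩ ⟨heq ▸ hv, hv⟩

theorem pairwise_disjoint_cycleEdges_shortcut {V : Type} [DecidableEq V] {D : Finset V} {f : V → ι}
    {C : ι → List V} (hf : ∀ v, v ∈ C (f v)) (hdep : ∀ j, ((C j).toFinset ∩ D).card ≤ 1) :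
    (Set.range f).Pairwise fun i j =>
      (cycleEdges (shortcut D f C i)).Disjoint (cycleEdges (shortcut D f C j)) :=
  fun _ hi _ hj hij =>
    disjoint_cycleEdges (nodup_shortcut D f C _) (nodup_shortcut D f C _)
      ((injOn_shortcut hf hdep).ne hi hj hij)
      (subsingleton_mem_shortcut_and_mem_shortcut (hdep _) hij)

end Shortcut

theorem stmt0_general {V : Type} [DecidableEq V]
    (w : V → V → ℝ)
    (htri : ∀ u v x, w u x ≤ w u v + w v x)
    (D : Finset V)
    (q : ℕ) (C : Fin q → List V)
    (hdep : ∀ j, ((C j).toFinset ∩ D).card = 1)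
    (hcov : ∀ v : V, ∃ j, v ∈ C j) :
    ∃ (q' : ℕ) (_ : q' ≤ q) (C' : Fin q' → List V),
      (∀ j, (C' j).Nodup) ∧ (∀ j, C' j ≠ []) ∧
      (∀ i j, i ≠ j →
        Disjoint (cycleEdges (C' i)).toFinset (cycleEdges (C' j)).toFinset) ∧
      (∀ j, ((C' j).toFinset ∩ D).card = 1) ∧
      (∀ v : V, ∃ j, v ∈ C' j) ∧
      (⨆ j, cycleWeight w (C' j)) ≤ ⨆ j, cycleWeight w (C j) := by
  choose f hf using hcov
  obtain ⟨e⟩ : Nonempty (Fin (Set.range f).ncard ≃ Set.range f) := ⟨(Finite.equivFin _).symm⟩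
  have hcard : (Set.range f).ncard ≤ q := by
    simpa using Set.ncard_le_card (Set.range f)
  have hdep' (j : Fin q) : ((shortcut D f C j).toFinset ∩ D).card = 1 := by
    rw [shortcut_toFinset_inter, hdep]
  have hne (j : Fin q) : shortcut D f C j ≠ [] := fun hnil => by
    simpa [hnil] using hdep' j
  have hdisj {i j : Fin (Set.range f).ncard} (hij : i ≠ j) :
      (cycleEdges (shortcut D f C (e i))).Disjoint (cycleEdges (shortcut D f C (e j))) :=
    pairwise_disjoint_cycleEdges_shortcut hf (fun j => (hdep j).le) (e i).2 (e j).2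
      (Subtype.coe_injective.ne (e.injective.ne hij))
  have hcover (v : V) : ∃ j, v ∈ shortcut D f C (e j) :=
    ⟨e.symm ⟨f v, v, rfl⟩, by simpa using mem_shortcut_self (D := D) hf v⟩
  exact ⟨_, hcard, fun j => shortcut D f C (e j), fun _ => nodup_shortcut D f C _, fun _ => hne _,
    fun _ _ hij => List.disjoint_toFinset_iff_disjoint.2 (hdisj hij), fun _ => hdep' _, hcover,
    iSup_cycleWeight_le_of_sublist htri (fun j => e j) fun _ => shortcut_sublist D f C _⟩

/-- from any family of cycles of the complete graph on `V`, each
containing exactly one depot of `D`, whose vertex sets together cover `V`, one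
can produce a family of at most as many pairwise edge-disjoint such cycles
covering `V` whose maximum cycle weight does not increase. -/
theorem stmt0 {V : Type} [Fintype V] [DecidableEq V]
    (w : V → V → ℝ)
    (hzero : ∀ v, w v v = 0)
    (hnonneg : ∀ u v, 0 ≤ w u v)
    (hsymm : ∀ u v, w u v = w v u)
    (htri : ∀ u v x, w u x ≤ w u v + w v x)
    (D : Finset V) (hD : D.Nonempty)
    (q : ℕ) (C : Fin q → List V)
    (hnodup : ∀ j, (C j).Nodup) (hne : ∀ j, C j ≠ [])
    (hdep : ∀ j, ((C j).toFinset ∩ D).card = 1)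
    (hcov : ∀ v : V, ∃ j, v ∈ C j) :
    ∃ (q' : ℕ) (_ : q' ≤ q) (C' : Fin q' → List V),
      (∀ j, (C' j).Nodup) ∧ (∀ j, C' j ≠ []) ∧
      (∀ i j, i ≠ j →
        Disjoint (cycleEdges (C' i)).toFinset (cycleEdges (C' j)).toFinset) ∧
      (∀ j, ((C' j).toFinset ∩ D).card = 1) ∧
      (∀ v : V, ∃ j, v ∈ C' j) ∧
      (⨆ j, cycleWeight w (C' j)) ≤ ⨆ j, cycleWeight w (C j) :=
  stmt0_general w htri D q C hdep hcov
end

section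
/- Let T be a tree that is a subgraph of the complete graph G on V with metric edge weights w, and let d be a vertex of T. Then there exists a closed walk in G that starts and ends at d, visits every vertex of T, visits each vertex of T other than d exactly once, and has total weight at most 2·w(T). -/
/-- The weight of a walk, given as the list of its vertices in order: the sum
of the weights of its consecutive pairs (with multiplicity). -/
def walkWeight {V : Type} (w : V → V → ℝ) (p : List V) : ℝ :=
  ((p.zip p.tail).map fun q => w q.1 q.2).sum

/-!
Grow a closed walk from `d`, starting with the trivial one. As long as a vertex of `T` is missing,
connectivity gives an edge `uv` of `T` from a visited `u` to an unvisited `v`; visiting `v` just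
before `u` costs `w x v + w v u - w x u ≤ 2 * w u v`, where `x` is the predecessor of `u`. Each edge
of `T` is charged at most once, since after its use both its ends are visited.
-/

section MetricWeight

variable {V : Type*} {w : V → V → ℝ}

theorem nonneg_of_symm_of_triangle (hsymm : ∀ u v, w u v = w v u)
    (htri : ∀ u v x, w u x ≤ w u v + w v x) (u v : V) : 0 ≤ w u v := by
  have hloop : 0 ≤ w v v := by linarith [htri u v v]
  linarith [htri v u v, hsymm u v]

theorem sym2Lift_nonneg_of_triangle (hsymm : ∀ u v, w u v = w v u)
    (htri : ∀ u v x, w u x ≤ w u v + w v x) (e : Sym2 V) : 0 ≤ Sym2.lift ⟨w, hsymm⟩ e :=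
  e.ind (nonneg_of_symm_of_triangle hsymm htri)

end MetricWeight

section WalkWeight

variable {V : Type} (w : V → V → ℝ)

theorem walkWeight_singleton (v : V) : walkWeight w [v] = 0 := by
  simp [walkWeight]

theorem walkWeight_cons_cons (u v : V) (l : List V) :
    walkWeight w (u :: v :: l) = w u v + walkWeight w (v :: l) := by
  simp [walkWeight]

theorem walkWeight_detour_le {w : V → V → ℝ} (hsymm : ∀ u v, w u v = w v u)
    (htri : ∀ u v x, w u x ≤ w u v + w v x) (x u v : V) (a b : List V) :
    walkWeight w (x :: (a ++ v :: u :: b)) ≤ walkWeight w (x :: (a ++ u :: b)) + 2 * w u v := by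
  induction a generalizing x with
  | nil =>
    simp only [List.nil_append, walkWeight_cons_cons]
    linarith [htri x u v, hsymm u v]
  | cons y a ih =>
    simp only [List.cons_append, walkWeight_cons_cons]
    linarith [ih y]

end WalkWeight

theorem exists_adj_mem_notMem {V : Type*} {G : SimpleGraph V} {T : G.Subgraph}
    (hconn : T.Preconnected) {s : Set V} {x y : V} (hx : x ∈ T.verts) (hy : y ∈ T.verts)
    (hxs : x ∈ s) (hys : y ∉ s) : ∃ u v, T.Adj u v ∧ u ∈ s ∧ v ∉ s := by
  obtain ⟨p⟩ := hconn.coe ⟨x, hx⟩ ⟨y, hy⟩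
  obtain ⟨e, -, hfst, hsnd⟩ := p.exists_boundary_dart (Subtype.val ⁻¹' s) hxs hys
  exact ⟨e.fst, e.snd, e.adj, hfst, hsnd⟩

/-- The closed walks obtained from the trivial walk at `d` by successively visiting a new vertex `v`
just before a visited neighbour `u` of `v` in `T`. In `DetourTour T d l F` the walk is `d :: l`, so
that `l` ends in `d`, and `F` is the set of the edges `uv` used so far. -/
inductive DetourTour {V : Type*} [DecidableEq V] {G : SimpleGraph V} (T : G.Subgraph) (d : V) :
    List V → Finset (Sym2 V) → Prop
  | base : DetourTour T d [d] ∅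
  | detour {a b : List V} {u v : V} {F : Finset (Sym2 V)} (htour : DetourTour T d (a ++ u :: b) F)
      (hadj : T.Adj u v) (hv : v ∉ a ++ u :: b) :
      DetourTour T d (a ++ v :: u :: b) (insert s(u, v) F)

namespace DetourTour

section Structure

variable {V : Type*} [DecidableEq V] {G : SimpleGraph V} {T : G.Subgraph} {d : V} {l : List V}
  {F : Finset (Sym2 V)}

theorem nodup (h : DetourTour T d l F) : l.Nodup := by
  induction h with
  | base => exact List.nodup_singleton d
  | detour _ _ hv ih => exact List.nodup_middle.2 (List.nodup_cons.2 ⟨hv, ih⟩)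

theorem getLast?_eq (h : DetourTour T d l F) : l.getLast? = some d := by
  induction h with
  | base => rfl
  | detour _ _ _ ih => simpa using ih

theorem root_mem (h : DetourTour T d l F) : d ∈ l :=
  List.mem_of_getLast? h.getLast?_eq

theorem edges_subset (h : DetourTour T d l F) : (F : Set (Sym2 V)) ⊆ T.edgeSet := by
  induction h with
  | base => simp
  | detour _ hadj _ ih =>
    rw [Finset.coe_insert]
    exact Set.insert_subset hadj ih

theorem mem_of_mem_edge (h : DetourTour T d l F) {e : Sym2 V} (he : e ∈ F) {x : V} (hx : x ∈ e) :
    x ∈ l := by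
  induction h with
  | base => simp at he
  | detour _ _ _ ih =>
    obtain rfl | he := Finset.mem_insert.1 he
    · obtain rfl | rfl := Sym2.mem_iff.1 hx <;> simp
    · have := ih he
      grind

theorem edge_notMem (h : DetourTour T d l F) {u v : V} (hv : v ∉ l) : s(u, v) ∉ F :=
  fun he ↦ hv (h.mem_of_mem_edge he (Sym2.mem_mk_right u v))

theorem exists_insert (h : DetourTour T d l F) (hconn : T.Preconnected) (hd : d ∈ T.verts) {z : V}
    (hz : z ∈ T.verts) (hzl : z ∉ l) : ∃ l', ∃ e ∉ F, DetourTour T d l' (insert e F) := by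
  obtain ⟨u, v, hadj, hu, hv⟩ := exists_adj_mem_notMem hconn (s := {x | x ∈ l}) hd hz h.root_mem hzl
  obtain ⟨a, b, rfl⟩ := List.append_of_mem hu
  exact ⟨a ++ v :: u :: b, s(u, v), h.edge_notMem hv, h.detour hadj hv⟩

theorem exists_spanning (hconn : T.Preconnected) (hfin : T.edgeSet.Finite) (hd : d ∈ T.verts) :
    ∃ l F, DetourTour T d l F ∧ ∀ v ∈ T.verts, v ∈ l := by
  have hfinite : {F | ∃ l, DetourTour T d l F}.Finite :=
    hfin.toFinset.powerset.finite_toSet.subset fun F ⟨_, h⟩ ↦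
      Finset.mem_powerset.2 (hfin.subset_toFinset.2 h.edges_subset)
  obtain ⟨F, ⟨l, h⟩, hmax⟩ := hfinite.exists_maximal ⟨∅, [d], base⟩
  refine ⟨l, F, h, fun z hz ↦ ?_⟩
  by_contra hzl
  obtain ⟨l', e, he, h'⟩ := h.exists_insert hconn hd hz hzl
  exact he (hmax ⟨l', h'⟩ (Finset.subset_insert e F) (Finset.mem_insert_self e F))

theorem count_cons_eq_one (h : DetourTour T d l F) {v : V} (hv : v ∈ l) (hvd : v ≠ d) :
    (d :: l).count v = 1 := by
  rw [List.count_cons_of_ne hvd.symm, List.count_eq_one_of_mem h.nodup hv]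

theorem isChain_ne_cons (h : DetourTour T d l F) (hl : l ≠ [d]) :
    (d :: l).IsChain (· ≠ ·) := by
  obtain - | ⟨x, l⟩ := l
  · exact List.isChain_singleton d
  refine List.isChain_cons_cons.2 ⟨?_, h.nodup.isChain⟩
  rintro rfl
  have hlast := h.getLast?_eq
  obtain - | ⟨y, l⟩ := l
  · exact hl rfl
  · rw [List.getLast?_cons_cons] at hlast
    exact (List.nodup_cons.1 h.nodup).1 (List.mem_of_getLast? hlast)

end Structure

section Weight

variable {V : Type} [DecidableEq V] {G : SimpleGraph V} {T : G.Subgraph} {d : V} {l : List V}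
  {F : Finset (Sym2 V)} {w : V → V → ℝ}

theorem walkWeight_le (h : DetourTour T d l F) (hzero : w d d = 0) (hsymm : ∀ u v, w u v = w v u)
    (htri : ∀ u v x, w u x ≤ w u v + w v x) :
    walkWeight w (d :: l) ≤ 2 * ∑ e ∈ F, Sym2.lift ⟨w, hsymm⟩ e := by
  induction h with
  | base => simp [walkWeight_cons_cons, walkWeight_singleton, hzero]
  | @detour a b u v _ htour _ hv ih =>
    rw [Finset.sum_insert (htour.edge_notMem hv), Sym2.lift_mk]
    linarith [walkWeight_detour_le hsymm htri d u v a b]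

theorem walkWeight_le_edgeSet (h : DetourTour T d l F) (hfin : T.edgeSet.Finite)
    (hzero : w d d = 0) (hsymm : ∀ u v, w u v = w v u) (htri : ∀ u v x, w u x ≤ w u v + w v x) :
    walkWeight w (d :: l) ≤ 2 * ∑ e ∈ hfin.toFinset, Sym2.lift ⟨w, hsymm⟩ e := by
  have hsum : ∑ e ∈ F, Sym2.lift ⟨w, hsymm⟩ e ≤ ∑ e ∈ hfin.toFinset, Sym2.lift ⟨w, hsymm⟩ e :=
    Finset.sum_le_sum_of_subset_of_nonneg (hfin.subset_toFinset.2 h.edges_subset)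
      fun e _ _ ↦ sym2Lift_nonneg_of_triangle hsymm htri e
  linarith [h.walkWeight_le hzero hsymm htri]

end Weight

end DetourTour

theorem stmt5_general {V : Type} [DecidableEq V] {G : SimpleGraph V} (w : V → V → ℝ)
    (hzero : ∀ v, w v v = 0)
    (hsymm : ∀ u v, w u v = w v u)
    (htri : ∀ u v x, w u x ≤ w u v + w v x)
    (T : G.Subgraph) (hconn : T.Preconnected) (hfin : T.edgeSet.Finite)
    (d : V) (hd : d ∈ T.verts) :
    ∃ p : List V,
      p ≠ [] ∧ p.head? = some d ∧ p.getLast? = some d ∧ p.IsChain (· ≠ ·) ∧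
      (∀ v ∈ T.verts, v ∈ p) ∧
      (∀ v ∈ T.verts, v ≠ d → p.count v = 1) ∧
      walkWeight w p ≤ 2 * ∑ e ∈ hfin.toFinset, Sym2.lift ⟨w, hsymm⟩ e := by
  obtain ⟨l, F, htour, hspan⟩ := DetourTour.exists_spanning hconn hfin hd
  have hweight := htour.walkWeight_le_edgeSet hfin (hzero d) hsymm htri
  by_cases hl : l = [d]
  · subst hl
    -- The walk `[d, d]` has a repeated entry, so the trivial walk `[d]` takes its place.
    refine ⟨[d], by simp, rfl, rfl, List.isChain_singleton d, hspan, fun v hv hvd ↦ ?_, ?_⟩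
    · exact absurd (List.mem_singleton.1 (hspan v hv)) hvd
    · simpa [walkWeight_cons_cons, hzero] using hweight
  · refine ⟨d :: l, List.cons_ne_nil d l, rfl, ?_, htour.isChain_ne_cons hl,
      fun v hv ↦ List.mem_cons_of_mem d (hspan v hv),
      fun v hv hvd ↦ htour.count_cons_eq_one (hspan v hv) hvd, hweight⟩
    simp [List.getLast?_cons, htour.getLast?_eq]

/-- for a tree `T` (a connected acyclic subgraph of the complete
graph on `V` with metric weights) and a vertex `d` of `T`, there is a closed
walk starting and ending at `d` that visits every vertex of `T`, visits every
vertex of `T` other than `d` exactly once, and has weight at most `2 ⋅ w(T)`. -/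
theorem stmt5 {V : Type} [Fintype V] [DecidableEq V]
    (w : V → V → ℝ)
    (hzero : ∀ v, w v v = 0)
    (hnonneg : ∀ u v, 0 ≤ w u v)
    (hsymm : ∀ u v, w u v = w v u)
    (htri : ∀ u v x, w u x ≤ w u v + w v x)
    (T : (⊤ : SimpleGraph V).Subgraph)
    (hconn : T.Connected) (hacyc : T.coe.IsAcyclic)
    (d : V) (hd : d ∈ T.verts) :
    ∃ p : List V,
      p ≠ [] ∧ p.head? = some d ∧ p.getLast? = some d ∧ p.Chain' (· ≠ ·) ∧
      (∀ v ∈ T.verts, v ∈ p) ∧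
      (∀ v ∈ T.verts, v ≠ d → p.count v = 1) ∧
      walkWeight w p ≤
        2 * ∑ e ∈ T.edgeSet.toFinite.toFinset, Sym2.lift ⟨w, hsymm⟩ e :=
  stmt5_general w hzero hsymm htri T hconn.preconnected T.edgeSet.toFinite d hd
end

section
/- Let λ and λ* be nonnegative reals. Suppose F is a forest in the complete graph G on V whose vertex set covers V, consisting of at most k trees, such that every tree of F contains at least one depot of D and has weight at most 2λ + λ*/2. Then there exists a rooted tour cover with at most k tours whose maximum tour weight is at most 4λ + λ*. -/
/-- `p` is a closed walk (in the complete graph) starting and ending at `d`. -/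
def IsClosedWalkAt {V : Type} (p : List V) (d : V) : Prop :=
  p ≠ [] ∧ p.head? = some d ∧ p.getLast? = some d ∧ p.Chain' (· ≠ ·)

/-- The total edge weight of a subgraph of the complete graph on `V`. -/
noncomputable def subWeight {V : Type} [Fintype V] (wE : Sym2 V → ℝ)
    (H : (⊤ : SimpleGraph V).Subgraph) : ℝ :=
  ∑ e ∈ H.edgeSet.toFinite.toFinset, wE e

/-!
In a finite connected graph there is a closed walk through all vertices that uses every edge at most
twice: as long as a vertex is missed, some edge `uv` leads from a visited vertex `u` to an unvisited
one `v`. This edge has not been used yet, so the detour `u, v, u` can be spliced into the walk.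
Applied to each tree of the forest, starting at one of its depots, this gives a tour of at most
twice the weight of the tree.
-/

section DoubledEdges

variable {V : Type*} {G : SimpleGraph V}

lemma exists_walk_detour {a b u v : V} (p : G.Walk a b) (hu : u ∈ p.support) (huv : G.Adj u v) :
    ∃ q : G.Walk a b, q.edges.Perm (s(u, v) :: s(u, v) :: p.edges) ∧
      ∀ x, x ∈ q.support ↔ x = v ∨ x ∈ p.support := by
  obtain ⟨r, s, rfl⟩ := p.mem_support_iff_exists_append.mp hu
  refine ⟨r.append (.cons huv (.cons huv.symm s)), ?_, fun x => ?_⟩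
  · rw [SimpleGraph.Walk.edges_append, SimpleGraph.Walk.edges_append]
    simp only [SimpleGraph.Walk.edges_cons, Sym2.eq_swap (a := v)]
    exact List.perm_middle.trans (List.perm_middle.cons _)
  · have := r.end_mem_support
    simp only [SimpleGraph.Walk.mem_support_append_iff, SimpleGraph.Walk.support_cons,
      List.mem_cons]
    grind

variable [DecidableEq V]

lemma exists_walk_support_ssubset_of_count_edges_le_two {a b x : V} (p : G.Walk a b)
    (hp : ∀ e, p.edges.count e ≤ 2) (hx : G.Reachable a x) (hxp : x ∉ p.support) :
    ∃ q : G.Walk a b, (∀ e, q.edges.count e ≤ 2) ∧ {v | v ∈ p.support} ⊂ {v | v ∈ q.support} := by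
  obtain ⟨r⟩ := hx
  obtain ⟨⟨⟨u, v⟩, huv⟩, -, hu, hv⟩ :=
    r.exists_boundary_dart {z | z ∈ p.support} p.start_mem_support hxp
  obtain ⟨q, hqe, hqs⟩ := exists_walk_detour p hu huv
  have huv_unused : p.edges.count s(u, v) = 0 :=
    List.count_eq_zero_of_not_mem fun h => hv (p.snd_mem_support_of_mem_edges h)
  refine ⟨q, fun e => ?_, fun y hy => (hqs y).mpr (.inr hy),
    fun h => hv (h ((hqs v).mpr (.inl rfl)))⟩
  rw [hqe.count_eq]
  rcases eq_or_ne s(u, v) e with rfl | he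
  · simp only [List.count_cons_self, huv_unused, le_refl]
  · simpa only [List.count_cons_of_ne he] using hp e

theorem exists_closed_walk_count_edges_le_two [Finite V] (d : V) :
    ∃ p : G.Walk d d, (∀ e, p.edges.count e ≤ 2) ∧ ∀ v, G.Reachable d v → v ∈ p.support := by
  obtain ⟨p, hp, hmax⟩ := Set.Finite.exists_maximalFor'
    (fun p : G.Walk d d => {v | v ∈ p.support}) {p | ∀ e, p.edges.count e ≤ 2} (Set.toFinite _)
    ⟨.nil, by simp⟩
  refine ⟨p, hp, fun v hv => by_contra fun hvp => ?_⟩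
  obtain ⟨q, hq, hpq⟩ := exists_walk_support_ssubset_of_count_edges_le_two p hp hv hvp
  exact hpq.not_subset (hmax hq hpq.subset)

end DoubledEdges

lemma sum_map_le_nsmul_sum_of_count_le {α M : Type*} [DecidableEq α] [AddCommMonoid M]
    [PartialOrder M] [IsOrderedAddMonoid M] {l : List α} {s : Finset α} {f : α → M} {n : ℕ}
    (hf : ∀ a ∈ s, 0 ≤ f a) (hl : ∀ a ∈ l, a ∈ s) (hn : ∀ a, l.count a ≤ n) :
    (l.map f).sum ≤ n • ∑ a ∈ s, f a := by
  have hls : l.toFinset ⊆ s := fun a ha => hl a (List.mem_toFinset.mp ha)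
  calc (l.map f).sum = ∑ a ∈ l.toFinset, l.count a • f a := Finset.sum_list_map_count l f
    _ ≤ ∑ a ∈ l.toFinset, n • f a :=
      Finset.sum_le_sum fun a ha => nsmul_le_nsmul_left (hf a (hls ha)) (hn a)
    _ ≤ ∑ a ∈ s, n • f a :=
      Finset.sum_le_sum_of_subset_of_nonneg hls fun a ha _ => nsmul_nonneg (hf a ha) n
    _ = n • ∑ a ∈ s, f a := Finset.sum_nsmul s n f

section Tours

variable {V : Type} {G : SimpleGraph V}

lemma walkWeight_support (w : V → V → ℝ) (hsymm : ∀ u v, w u v = w v u)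
    {a b : V} (p : G.Walk a b) :
    walkWeight w p.support = (p.edges.map (Sym2.lift ⟨w, hsymm⟩)).sum := by
  induction p with
  | nil => simp [walkWeight]
  | cons h p ih =>
    rw [SimpleGraph.Walk.edges_cons, List.map_cons, List.sum_cons, ← ih]
    cases p <;> simp [walkWeight]

lemma isClosedWalkAt_support {d : V} (p : G.Walk d d) :
    IsClosedWalkAt p.support d := by
  refine ⟨p.support_ne_nil, ?_, ?_, p.isChain_adj_support.imp fun _ _ => G.ne_of_adj⟩
  · rw [List.head?_eq_some_head p.support_ne_nil, p.head_support]
  · rw [List.getLast?_eq_some_getLast p.support_ne_nil, p.getLast_support]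

variable [Fintype V]

theorem exists_isClosedWalkAt_walkWeight_le (w : V → V → ℝ) (hnonneg : ∀ u v, 0 ≤ w u v)
    (hsymm : ∀ u v, w u v = w v u) {H : (⊤ : SimpleGraph V).Subgraph} (hconn : H.Connected)
    {d : V} (hd : d ∈ H.verts) :
    ∃ p : List V, IsClosedWalkAt p d ∧ (∀ v ∈ H.verts, v ∈ p) ∧
      walkWeight w p ≤ 2 * subWeight (Sym2.lift ⟨w, hsymm⟩) H := by
  classical
  obtain ⟨p, hp, hcov⟩ := exists_closed_walk_count_edges_le_two (G := H.spanningCoe) d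
  refine ⟨p.support, isClosedWalkAt_support p, fun v hv => hcov v ?_, ?_⟩
  · exact (hconn.coe.preconnected ⟨d, hd⟩ ⟨v, hv⟩).map H.coeEmbeddingSpanningCoe.toHom
  · rw [walkWeight_support w hsymm, subWeight, ← Nat.cast_ofNat, ← nsmul_eq_mul]
    refine sum_map_le_nsmul_sum_of_count_le (fun e _ => e.ind hnonneg) (fun e he => ?_) hp
    rw [Set.Finite.mem_toFinset, ← H.edgeSet_spanningCoe]
    exact p.edges_subset_edgeSet he

theorem stmt6_general (w : V → V → ℝ) (hnonneg : ∀ u v, 0 ≤ w u v)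
    (hsymm : ∀ u v, w u v = w v u) (D : Set V) {ι : Type*}
    (T : ι → (⊤ : SimpleGraph V).Subgraph) (hconn : ∀ i, (T i).Connected)
    (hcov : ∀ v : V, ∃ i, v ∈ (T i).verts) (hdep : ∀ i, ∃ d ∈ D, d ∈ (T i).verts)
    {B : ℝ} (hwt : ∀ i, subWeight (Sym2.lift ⟨w, hsymm⟩) (T i) ≤ B) :
    ∃ tours : ι → List V,
      (∀ i, ∃ d ∈ D, IsClosedWalkAt (tours i) d) ∧
      (∀ v : V, ∃ i, v ∈ tours i) ∧
      (∀ i, walkWeight w (tours i) ≤ 2 * B) := by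
  choose d hdD hdT using hdep
  choose tour hclosed hvisit hweight using
    fun i => exists_isClosedWalkAt_walkWeight_le w hnonneg hsymm (hconn i) (hdT i)
  refine ⟨tour, fun i => ⟨d i, hdD i, hclosed i⟩, fun v => (hcov v).imp fun i => hvisit i v,
    fun i => ?_⟩
  linarith [hweight i, hwt i]

end Tours

/-- if `F` is a forest (given by its at most `k` pairwise
vertex-disjoint trees) covering `V`, each tree containing a depot of `D` and of
weight at most `2λ + λ*/2`, then there is a rooted tour cover with at most `k`
tours whose maximum tour weight is at most `4λ + λ*`. -/
theorem stmt6 {V : Type} [Fintype V] [DecidableEq V]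
    (w : V → V → ℝ)
    (hzero : ∀ v, w v v = 0)
    (hnonneg : ∀ u v, 0 ≤ w u v)
    (hsymm : ∀ u v, w u v = w v u)
    (htri : ∀ u v x, w u x ≤ w u v + w v x)
    (D : Finset V) (hD : D.Nonempty)
    (lam lamstar : ℝ) (hlam : 0 ≤ lam) (hlamstar : 0 ≤ lamstar)
    (k : ℕ) (q : ℕ) (hq : q ≤ k)
    (T : Fin q → (⊤ : SimpleGraph V).Subgraph)
    (hconn : ∀ i, (T i).Connected)
    (hacyc : ∀ i, (T i).coe.IsAcyclic)
    (hdisj : ∀ i j, i ≠ j → Disjoint (T i).verts (T j).verts)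
    (hcov : ∀ v : V, ∃ i, v ∈ (T i).verts)
    (hdep : ∀ i, ∃ d ∈ D, d ∈ (T i).verts)
    (hwt : ∀ i, subWeight (Sym2.lift ⟨w, hsymm⟩) (T i) ≤ 2 * lam + lamstar / 2) :
    ∃ (q' : ℕ) (_ : q' ≤ k) (tours : Fin q' → List V),
      (∀ i, ∃ d ∈ D, IsClosedWalkAt (tours i) d) ∧
      (∀ v : V, ∃ i, v ∈ tours i) ∧
      (∀ i, walkWeight w (tours i) ≤ 4 * lam + lamstar) := by
  obtain ⟨tours, hrooted, hvisit, hweight⟩ := stmt6_general w hnonneg hsymm D T hconn hcov hdep hwt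
  exact ⟨q, hq, tours, hrooted, hvisit, fun i => (hweight i).trans_eq (by ring)⟩
end

section
/- Let {C_1, …, C_q} be a feasible rooted cycle cover of V, i.e., a family of pairwise edge-disjoint cycles of G, each containing exactly one depot of D, whose vertex sets together cover V. Then there exists a rooted spanning forest F of (V, D) with w(F) ≤ Σ_{j=1}^{q} ( w(C_j) − max_{e ∈ E(C_j)} w(e) ). In particular, any minimum-weight rooted spanning forest F* satisfies w(F*) ≤ Σ_{j=1}^{q} ( w(C_j) − max_{e ∈ E(C_j)} w(e) ). -/
/-- The maximum edge weight of a cycle (0 for the empty list; for a nonempty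
cycle with nonnegative weights this is the maximum weight of its edges). -/
def maxEdgeWeight {V : Type} (w : V → V → ℝ) (l : List V) : ℝ :=
  (((l.zip (l.rotate 1)).map fun p => w p.1 p.2).foldr max 0)

/-- The total edge weight of a simple graph on the finite vertex type `V`. -/
noncomputable def graphWeight {V : Type} [Fintype V] (wE : Sym2 V → ℝ)
    (F : SimpleGraph V) : ℝ :=
  ∑ e ∈ F.edgeSet.toFinite.toFinset, wE e

/-- `F` is a rooted spanning forest of `(V, D)`: an acyclic (simple sub)graph
of the complete graph on `V` each of whose connected components contains
exactly one depot of `D`. -/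
def IsRSF {V : Type} (D : Finset V) (F : SimpleGraph V) : Prop :=
  F.IsAcyclic ∧
    ∀ c : F.ConnectedComponent, ∃! d : V, d ∈ D ∧ F.connectedComponentMk d = c

/-!
Delete a heaviest edge from every cycle. What is left of a cycle is still a path through all of its
vertices, one of which is a depot, so the union of these paths joins every vertex to a depot. In an
inclusion-minimal subgraph with that property no edge lies on a cycle or on a path between two
depots, since such an edge could be deleted; it is therefore a rooted spanning forest, and its
weight is at most the total weight of the paths.
-/

section RootedSubgraphs

variable {V : Type*} {G : SimpleGraph V} {D : Set V}

/-- Every vertex is joined in `G` to a root in `D`. The rooted spanning forests of `(V, D)` are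
obtained as the inclusion-minimal graphs with this property. -/
def IsRooted (D : Set V) (G : SimpleGraph V) : Prop :=
  ∀ v, ∃ d ∈ D, G.Reachable v d

theorem reachable_deleteEdges_or_endpoint {u v : V} (huv : G.Reachable u v) (x y : V) :
    (G.deleteEdges {s(x, y)}).Reachable u v ∨ (G.deleteEdges {s(x, y)}).Reachable u x ∨
      (G.deleteEdges {s(x, y)}).Reachable u y := by
  obtain ⟨p⟩ := huv
  induction p with
  | nil => exact .inl .rfl
  | @cons a b _ hab _ ih =>
    by_cases he : s(a, b) = s(x, y)
    · rcases Sym2.eq_iff.1 he with ⟨rfl, -⟩ | ⟨rfl, -⟩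
      · exact .inr (.inl .rfl)
      · exact .inr (.inr .rfl)
    · have hab' : (G.deleteEdges {s(x, y)}).Reachable a b :=
        (SimpleGraph.deleteEdges_adj.2 ⟨hab, he⟩).reachable
      exact ih.imp hab'.trans (Or.imp hab'.trans hab'.trans)

theorem reachable_deleteEdges_of_isPath_cons {u v z : V} {huv : G.Adj u v} {p : G.Walk v z}
    (hp : (p.cons huv).IsPath) : (G.deleteEdges {s(u, v)}).Reachable v z :=
  have hu : u ∉ p.support := (SimpleGraph.Walk.cons_isPath_iff huv p).1 hp |>.2
  ⟨p.toDeleteEdge s(u, v) fun he => hu (p.fst_mem_support_of_mem_edges he)⟩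

namespace IsRooted

theorem deleteEdges (hG : IsRooted D G) {x y : V}
    (hx : ∃ d ∈ D, (G.deleteEdges {s(x, y)}).Reachable x d)
    (hy : ∃ d ∈ D, (G.deleteEdges {s(x, y)}).Reachable y d) :
    IsRooted D (G.deleteEdges {s(x, y)}) := by
  intro v
  obtain ⟨d, hd, hvd⟩ := hG v
  rcases reachable_deleteEdges_or_endpoint hvd x y with hvd | hvx | hvy
  · exact ⟨d, hd, hvd⟩
  · exact hx.imp fun _ h => ⟨h.1, hvx.trans h.2⟩
  · exact hy.imp fun _ h => ⟨h.1, hvy.trans h.2⟩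

theorem not_deleteEdges_of_minimal (hG : Minimal (IsRooted D) G) {x y : V} (hxy : G.Adj x y) :
    ¬ IsRooted D (G.deleteEdges {s(x, y)}) := by
  intro h
  have hxy' := hG.le_of_le h (G.deleteEdges_le _) hxy
  exact (SimpleGraph.deleteEdges_adj.1 hxy').2 rfl

theorem isAcyclic_of_minimal (hG : Minimal (IsRooted D) G) : G.IsAcyclic := by
  refine SimpleGraph.isAcyclic_iff_forall_adj_isBridge.2 fun x y hxy => ?_
  rw [SimpleGraph.isBridge_iff]
  intro hreach
  obtain ⟨d, hd, hxd⟩ := hG.prop x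
  have hdx : (G.deleteEdges {s(x, y)}).Reachable d x := by
    rcases reachable_deleteEdges_or_endpoint hxd.symm x y with hdx | hdx | hdy
    · exact hdx
    · exact hdx
    · exact hdy.trans hreach.symm
  exact not_deleteEdges_of_minimal hG hxy <|
    hG.prop.deleteEdges ⟨d, hd, hdx.symm⟩ ⟨d, hd, (hdx.trans hreach).symm⟩

theorem eq_of_reachable_of_minimal (hG : Minimal (IsRooted D) G) {d d' : V} (hd : d ∈ D)
    (hd' : d' ∈ D) (h : G.Reachable d d') : d = d' := by
  obtain ⟨p, hp⟩ := h.exists_isPath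
  cases p with
  | nil => rfl
  | cons hdv p =>
    exact (not_deleteEdges_of_minimal hG hdv <| hG.prop.deleteEdges ⟨d, hd, .rfl⟩
      ⟨d', hd', reachable_deleteEdges_of_isPath_cons hp⟩).elim

end IsRooted

end RootedSubgraphs

theorem isRSF_of_minimal_isRooted {V : Type} {D : Finset V} {F : SimpleGraph V}
    (hF : Minimal (IsRooted (D : Set V)) F) : IsRSF D F := by
  refine ⟨IsRooted.isAcyclic_of_minimal hF, fun c => ?_⟩
  induction c using SimpleGraph.ConnectedComponent.ind with | _ v =>
  obtain ⟨d, hd, hvd⟩ := hF.prop v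
  refine ⟨d, ⟨hd, SimpleGraph.ConnectedComponent.sound hvd.symm⟩, ?_⟩
  rintro d' ⟨hd', hd'v⟩
  exact IsRooted.eq_of_reachable_of_minimal hF hd' hd
    ((SimpleGraph.ConnectedComponent.exact hd'v).trans hvd)

theorem exists_isRSF_le {V : Type} [Finite V] {D : Finset V} {H : SimpleGraph V}
    (hH : IsRooted (D : Set V) H) : ∃ F ≤ H, IsRSF D F := by
  obtain ⟨F, hFH, hF⟩ :=
    (Set.toFinite {F : SimpleGraph V | IsRooted (D : Set V) F}).exists_le_minimal hH
  exact ⟨F, hFH, isRSF_of_minimal_isRooted hF⟩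

theorem exists_mem_foldr_max_eq {α : Type*} [LinearOrder α] {a : α} {l : List α} (hl : l ≠ [])
    (ha : ∀ x ∈ l, a ≤ x) : ∃ x ∈ l, l.foldr max a = x := by
  induction l with
  | nil => exact absurd rfl hl
  | cons b l ih =>
    rcases eq_or_ne l [] with rfl | hl'
    · exact ⟨b, by simp, max_eq_left (ha b (by simp))⟩
    · obtain ⟨x, hx, hmax⟩ := ih hl' fun x hx => ha x (List.mem_cons_of_mem b hx)
      rw [List.foldr_cons, hmax]
      rcases max_choice b x with h | h
      · exact ⟨b, by simp, h⟩
      · exact ⟨x, List.mem_cons_of_mem b hx, h⟩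

theorem finset_sum_le_multiset_sum {α M : Type*} [AddCommMonoid M] [PartialOrder M]
    [IsOrderedAddMonoid M] {f : α → M} (hf : ∀ a, 0 ≤ f a) {s : Finset α} {m : Multiset α}
    (h : s.val ⊆ m) : ∑ a ∈ s, f a ≤ (m.map f).sum := by
  obtain ⟨t, rfl⟩ := Multiset.le_iff_exists_add.1 ((Multiset.le_iff_subset s.nodup).2 h)
  have ht : 0 ≤ (t.map f).sum := Multiset.sum_nonneg (by simpa using fun a _ => hf a)
  rw [Multiset.map_add, Multiset.sum_add]
  exact le_add_of_nonneg_right ht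

theorem graphWeight_le_sum {V : Type} [Fintype V] {ι : Type*} [Fintype ι] {wE : Sym2 V → ℝ}
    (hwE : ∀ e, 0 ≤ wE e) {F : SimpleGraph V} {E : ι → List (Sym2 V)}
    (hF : ∀ e ∈ F.edgeSet, ∃ j, e ∈ E j) : graphWeight wE F ≤ ∑ j, ((E j).map wE).sum :=
  calc graphWeight wE F ≤ ((Finset.univ.val.bind fun j => (E j : Multiset (Sym2 V))).map wE).sum :=
        finset_sum_le_multiset_sum hwE fun e he => by
          simpa using hF e (by simpa using he)
    _ = ∑ j, ((E j).map wE).sum := by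
        simp only [Multiset.map_bind, Multiset.sum_bind, Multiset.map_coe, Multiset.sum_coe,
          Finset.sum]

section Cycles

variable {V : Type} {l : List V}

theorem cycleWeight_eq_sum_cycleEdges {w : V → V → ℝ} (hsymm : ∀ u v, w u v = w v u)
    (l : List V) : cycleWeight w l = ((cycleEdges l).map (Sym2.lift ⟨w, hsymm⟩)).sum := by
  simp [cycleWeight, cycleEdges, Function.comp_def]

theorem maxEdgeWeight_eq_foldr_cycleEdges {w : V → V → ℝ} (hsymm : ∀ u v, w u v = w v u)
    (l : List V) :
    maxEdgeWeight w l = ((cycleEdges l).map (Sym2.lift ⟨w, hsymm⟩)).foldr max 0 := by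
  simp [maxEdgeWeight, cycleEdges, Function.comp_def]

theorem cycleEdges_ne_nil (hl : l ≠ []) : cycleEdges l ≠ [] := by
  simpa [cycleEdges, List.zip_eq_nil_iff] using hl

theorem exists_mem_cycleEdges_maxEdgeWeight_eq {w : V → V → ℝ} (hnonneg : ∀ u v, 0 ≤ w u v)
    (hsymm : ∀ u v, w u v = w v u) (hl : l ≠ []) :
    ∃ e ∈ cycleEdges l, maxEdgeWeight w l = Sym2.lift ⟨w, hsymm⟩ e := by
  have hwE : ∀ e, 0 ≤ Sym2.lift ⟨w, hsymm⟩ e := Sym2.ind hnonneg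
  rw [maxEdgeWeight_eq_foldr_cycleEdges hsymm]
  obtain ⟨x, hx, hmax⟩ := exists_mem_foldr_max_eq (a := 0)
    (l := (cycleEdges l).map (Sym2.lift ⟨w, hsymm⟩)) (by simpa using cycleEdges_ne_nil hl)
    (List.forall_mem_map.2 fun e _ => hwE e)
  obtain ⟨e, he, rfl⟩ := List.mem_map.1 hx
  exact ⟨e, he, hmax⟩

theorem cycleEdges_rotate (l : List V) (k : ℕ) :
    cycleEdges (l.rotate k) = (cycleEdges l).rotate k := by
  have hlen : l.length = (l.rotate 1).length := (l.length_rotate 1).symm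
  simp only [cycleEdges, List.zip]
  rw [List.rotate_rotate, add_comm, ← List.rotate_rotate,
    ← List.zipWith_rotate_distrib _ _ _ _ hlen, List.map_rotate]

theorem exists_cycleEdges_rotate_eq_cons {e : Sym2 V} (he : e ∈ cycleEdges l) :
    ∃ k E, cycleEdges (l.rotate k) = e :: E := by
  obtain ⟨s, t, hst⟩ := List.append_of_mem he
  exact ⟨s.length, t ++ s, by
    rw [cycleEdges_rotate, hst, List.rotate_append_length_eq, List.cons_append]⟩

theorem mk_getElem_rotate_mem_tail_cycleEdges {i : ℕ} (hi : i + 1 < (l.rotate 1).length) :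
    s((l.rotate 1)[i], (l.rotate 1)[i + 1]) ∈ (cycleEdges l).tail := by
  have hi' : i + 1 < l.length := by simpa using hi
  refine List.mem_iff_getElem.2 ⟨i, by simp [cycleEdges]; omega, ?_⟩
  simp [cycleEdges, List.getElem_rotate, Nat.mod_eq_of_lt hi']

theorem reachable_of_tail_cycleEdges {u v : V} (hu : u ∈ l) (hv : v ∈ l) :
    (SimpleGraph.fromEdgeSet {e | e ∈ (cycleEdges l).tail}).Reachable u v := by
  set R := (SimpleGraph.fromEdgeSet {e | e ∈ (cycleEdges l).tail}).Reachable
  have hR : Equivalence R := SimpleGraph.reachable_is_equivalence _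
  have : IsTrans V R := ⟨fun _ _ _ => hR.trans⟩
  have : Std.Symm R := ⟨fun _ _ => hR.symm⟩
  -- The first edge joins `l[0]` to `l[1]`, so the others form a path that starts at `l[1]`.
  have hchain : (l.rotate 1).IsChain R := by
    refine List.isChain_iff_getElem.2 fun i hi => ?_
    by_cases heq : (l.rotate 1)[i] = (l.rotate 1)[i + 1]
    · exact heq ▸ hR.refl _
    · exact (SimpleGraph.fromEdgeSet_adj _ |>.2
        ⟨mk_getElem_rotate_mem_tail_cycleEdges hi, heq⟩).reachable
  exact hchain.pairwise.forall_of_forall (fun x _ => hR.refl x)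
    (List.mem_rotate.2 hu) (List.mem_rotate.2 hv)

theorem exists_edges_sum_eq_and_reachable {w : V → V → ℝ} (hnonneg : ∀ u v, 0 ≤ w u v)
    (hsymm : ∀ u v, w u v = w v u) (hl : l ≠ []) :
    ∃ E : List (Sym2 V),
      (E.map (Sym2.lift ⟨w, hsymm⟩)).sum = cycleWeight w l - maxEdgeWeight w l ∧
      ∀ u ∈ l, ∀ v ∈ l, (SimpleGraph.fromEdgeSet {e | e ∈ E}).Reachable u v := by
  obtain ⟨e, he, hmax⟩ := exists_mem_cycleEdges_maxEdgeWeight_eq hnonneg hsymm hl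
  obtain ⟨k, E, hE⟩ := exists_cycleEdges_rotate_eq_cons he
  refine ⟨E, ?_, fun u hu v hv => ?_⟩
  · have hperm : (cycleEdges l).Perm (e :: E) := by
      rw [← hE, cycleEdges_rotate]
      exact (List.rotate_perm _ k).symm
    rw [cycleWeight_eq_sum_cycleEdges hsymm, (hperm.map _).sum_eq, hmax, List.map_cons,
      List.sum_cons, add_sub_cancel_left]
  · have hreach := reachable_of_tail_cycleEdges (l := l.rotate k) (List.mem_rotate.2 hu)
      (List.mem_rotate.2 hv)
    rwa [hE] at hreach

end Cycles

theorem stmt7_general {V : Type} [Fintype V] {ι : Type*} [Fintype ι] (w : V → V → ℝ)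
    (hnonneg : ∀ u v, 0 ≤ w u v) (hsymm : ∀ u v, w u v = w v u) (D : Finset V) (C : ι → List V)
    (hdep : ∀ j, ∃ d ∈ D, d ∈ C j) (hcov : ∀ v : V, ∃ j, v ∈ C j) :
    (∃ F : SimpleGraph V, IsRSF D F ∧
        graphWeight (Sym2.lift ⟨w, hsymm⟩) F ≤
          ∑ j, (cycleWeight w (C j) - maxEdgeWeight w (C j))) ∧
    (∀ F : SimpleGraph V, IsRSF D F →
      (∀ F' : SimpleGraph V, IsRSF D F' →
        graphWeight (Sym2.lift ⟨w, hsymm⟩) F ≤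
          graphWeight (Sym2.lift ⟨w, hsymm⟩) F') →
      graphWeight (Sym2.lift ⟨w, hsymm⟩) F ≤
        ∑ j, (cycleWeight w (C j) - maxEdgeWeight w (C j))) := by
  have hne (j : ι) : C j ≠ [] := (hdep j).elim fun _ hd => List.ne_nil_of_mem hd.2
  choose E hEsum hEreach using fun j => exists_edges_sum_eq_and_reachable hnonneg hsymm (hne j)
  have hrooted : IsRooted (D : Set V) (SimpleGraph.fromEdgeSet {e | ∃ j, e ∈ E j}) := by
    intro v
    obtain ⟨j, hv⟩ := hcov v
    obtain ⟨d, hd, hdj⟩ := hdep j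
    exact ⟨d, hd, (hEreach j v hv d hdj).mono (SimpleGraph.fromEdgeSet_mono fun e he => ⟨j, he⟩)⟩
  obtain ⟨F, hFE, hF⟩ := exists_isRSF_le hrooted
  have hle : graphWeight (Sym2.lift ⟨w, hsymm⟩) F ≤
      ∑ j, (cycleWeight w (C j) - maxEdgeWeight w (C j)) := by
    simp only [← hEsum]
    exact graphWeight_le_sum (Sym2.ind hnonneg) ((SimpleGraph.le_fromEdgeSet_iff _ _).1 hFE)
  exact ⟨⟨F, hF, hle⟩, fun _ _ hmin => (hmin F hF).trans hle⟩

/-- given a feasible rooted cycle cover `{C_1, …, C_q}` (pairwise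
edge-disjoint cycles, each containing exactly one depot, covering `V`), there
is a rooted spanning forest of weight at most
`Σ_j (w(C_j) − max_{e ∈ E(C_j)} w(e))`; in particular any minimum-weight
rooted spanning forest satisfies this bound. -/
theorem stmt7 {V : Type} [Fintype V] [DecidableEq V]
    (w : V → V → ℝ)
    (hzero : ∀ v, w v v = 0)
    (hnonneg : ∀ u v, 0 ≤ w u v)
    (hsymm : ∀ u v, w u v = w v u)
    (htri : ∀ u v x, w u x ≤ w u v + w v x)
    (D : Finset V) (hD : D.Nonempty)
    (q : ℕ) (C : Fin q → List V)
    (hnodup : ∀ j, (C j).Nodup) (hne : ∀ j, C j ≠ [])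
    (hdisj : ∀ i j, i ≠ j →
      Disjoint (cycleEdges (C i)).toFinset (cycleEdges (C j)).toFinset)
    (hdep : ∀ j, ((C j).toFinset ∩ D).card = 1)
    (hcov : ∀ v : V, ∃ j, v ∈ C j) :
    (∃ F : SimpleGraph V, IsRSF D F ∧
        graphWeight (Sym2.lift ⟨w, hsymm⟩) F ≤
          ∑ j, (cycleWeight w (C j) - maxEdgeWeight w (C j))) ∧
    (∀ F : SimpleGraph V, IsRSF D F →
      (∀ F' : SimpleGraph V, IsRSF D F' →
        graphWeight (Sym2.lift ⟨w, hsymm⟩) F ≤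
          graphWeight (Sym2.lift ⟨w, hsymm⟩) F') →
      graphWeight (Sym2.lift ⟨w, hsymm⟩) F ≤
        ∑ j, (cycleWeight w (C j) - maxEdgeWeight w (C j))) := by
  have hmem (j : Fin q) : ∃ d, d ∈ (C j).toFinset ∩ D := Finset.card_pos.1 (by simp [hdep j])
  exact stmt7_general w hnonneg hsymm D C (fun j => by simpa [and_comm] using hmem j) hcov
end

section
/- Suppose there exists a family of cycles of G, each containing exactly one depot of D, whose vertex sets together cover V and whose maximum cycle weight is λ*. Then every edge e of any minimum-weight rooted spanning forest F* of (V, D) satisfies w(e) ≤ λ*. -/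
/-!
Deleting an edge of a minimum-weight rooted spanning forest cuts its tree in two, and the part of
one endpoint `b` contains no depot: what remains is a rooted spanning forest for `D ∪ {b}`, in which
`b` may be replaced by any other vertex of its tree. The given cycle through `b` also visits a
depot, so it has an edge leaving the tree of `b`, and adding this edge reconnects that tree to a
depot, giving a rooted spanning forest for `D` again. By minimality the deleted edge weighs at most
as much as the added one, hence at most as much as the cycle.
-/

open SimpleGraph

section CyclicLists

variable {α : Type*}

theorem cycle_chain_coe_iff_forall_mem_zip_rotate {r : α → α → Prop} {l : List α} :
    Cycle.Chain r (l : Cycle α) ↔ ∀ p ∈ l.zip (l.rotate 1), r p.1 p.2 := by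
  cases l with
  | nil => simp
  | cons a m =>
    rw [Cycle.chain_coe_cons, ← List.cons_append, List.isChain_cons_append_singleton_iff_forall₂,
      List.forall₂_iff_zip]
    simp

theorem exists_mem_zip_rotate_of_mem_of_not {P : α → Prop} {l : List α} {a b : α}
    (hal : a ∈ l) (hbl : b ∈ l) (ha : P a) (hb : ¬P b) :
    ∃ p ∈ l.zip (l.rotate 1), P p.1 ∧ ¬P p.2 := by
  by_contra! hclosed
  have : IsTrans α (fun x y ↦ P x → P y) := ⟨fun _ _ _ hxy hyz ↦ hyz ∘ hxy⟩
  have hchain : Cycle.Chain (fun x y ↦ P x → P y) (l : Cycle α) :=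
    cycle_chain_coe_iff_forall_mem_zip_rotate.2 hclosed
  exact hb (Cycle.chain_iff_pairwise.1 hchain a hal b hbl ha)

end CyclicLists

section Weights

variable {V : Type}

theorem le_cycleWeight_of_mem_zip_rotate {w : V → V → ℝ} (hnonneg : ∀ u v, 0 ≤ w u v)
    {l : List V} {p : V × V} (hp : p ∈ l.zip (l.rotate 1)) : w p.1 p.2 ≤ cycleWeight w l := by
  refine List.single_le_sum ?_ _ (List.mem_map_of_mem hp)
  simp only [List.forall_mem_map]
  exact fun q _ ↦ hnonneg q.1 q.2

theorem graphWeight_sup_edge [Fintype V] (c : Sym2 V → ℝ) {G : SimpleGraph V} {x y : V}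
    (hne : x ≠ y) (hadj : ¬G.Adj x y) :
    graphWeight c (G ⊔ edge x y) = c s(x, y) + graphWeight c G := by
  classical
  have hedges : (G ⊔ edge x y).edgeSet.toFinite.toFinset =
      insert s(x, y) G.edgeSet.toFinite.toFinset := by
    ext e
    simp [edgeSet_edge_of_ne hne]
  rw [graphWeight, hedges, Finset.sum_insert (by simpa using hadj), graphWeight]

end Weights

section Reachability

variable {V : Type*} {G : SimpleGraph V}

theorem reachable_sup_edge_iff {x y u v : V} :
    (G ⊔ edge x y).Reachable u v ↔
      G.Reachable u v ∨ G.Reachable u x ∧ G.Reachable y v ∨ G.Reachable u y ∧ G.Reachable x v := by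
  have hle : G ≤ G ⊔ edge x y := le_sup_left
  have hxy : (G ⊔ edge x y).Reachable x y := by
    obtain rfl | hne := eq_or_ne x y
    · exact .rfl
    · exact Adj.reachable (by simp [edge_adj, hne])
  constructor
  · rintro ⟨p⟩
    induction p with
    | nil => exact .inl .rfl
    | cons hadj _ ih =>
      rw [sup_adj, edge_adj] at hadj
      obtain hadj | ⟨⟨rfl, rfl⟩ | ⟨rfl, rfl⟩, -⟩ := hadj
      · have := hadj.reachable
        exact ih.imp this.trans (.imp (.imp_left this.trans) (.imp_left this.trans))
      all_goals
        simp only [Reachable.rfl, true_and] at ih ⊢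
        tauto
  · rintro (huv | ⟨hux, hyv⟩ | ⟨huy, hxv⟩)
    · exact huv.mono hle
    · exact (hux.mono hle).trans (hxy.trans (hyv.mono hle))
    · exact (huy.mono hle).trans (hxy.symm.trans (hxv.mono hle))

theorem exists_eq_sup_edge_of_isAcyclic {F : SimpleGraph V} (hF : F.IsAcyclic) {a b : V}
    (hab : F.Adj a b) : ∃ G : SimpleGraph V, F = G ⊔ edge a b ∧ ¬G.Reachable a b := by
  have hF_eq : F = F \ edge a b ⊔ edge a b :=
    (sdiff_sup_cancel ((edge_le_iff F).2 (.inr hab))).symm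
  refine ⟨F \ edge a b, hF_eq, fun hreach ↦ ?_⟩
  rw [hF_eq, isAcyclic_sup_fromEdgeSet_iff] at hF
  simpa [hab.ne, edge_adj] using hF.2 hreach

end Reachability

section RootedSpanningForests

variable {V : Type} {D : Finset V} {F G : SimpleGraph V}

theorem isRSF_iff :
    IsRSF D F ↔ F.IsAcyclic ∧ (∀ v, ∃ d ∈ D, F.Reachable d v) ∧
      ∀ d ∈ D, ∀ d' ∈ D, F.Reachable d d' → d = d' := by
  refine and_congr_right fun _ ↦ ⟨fun h ↦ ⟨fun v ↦ ?_, fun d hd d' hd' hdd' ↦ ?_⟩, ?_⟩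
  · obtain ⟨d, ⟨hd, hdv⟩, -⟩ := h (F.connectedComponentMk v)
    exact ⟨d, hd, ConnectedComponent.exact hdv⟩
  · exact (h (F.connectedComponentMk d')).unique ⟨hd, ConnectedComponent.sound hdd'⟩ ⟨hd', rfl⟩
  · rintro ⟨hreach, huniq⟩ c
    induction c using ConnectedComponent.ind with | _ v
    obtain ⟨d, hd, hdv⟩ := hreach v
    refine ⟨d, ⟨hd, ConnectedComponent.sound hdv⟩, fun d' ⟨hd', hd'v⟩ ↦ ?_⟩
    exact huniq d' hd' d hd ((ConnectedComponent.exact hd'v).trans hdv.symm)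

variable [DecidableEq V]

theorem notMem_and_isRSF_insert_iff {b : V} :
    b ∉ D ∧ IsRSF (insert b D) G ↔
      G.IsAcyclic ∧ (∀ v, G.Reachable b v ∨ ∃ d ∈ D, G.Reachable d v) ∧
        (∀ d ∈ D, ¬G.Reachable b d) ∧ ∀ d ∈ D, ∀ d' ∈ D, G.Reachable d d' → d = d' := by
  simp only [isRSF_iff, Finset.exists_mem_insert, Finset.forall_mem_insert]
  constructor
  · rintro ⟨hb, hacyc, hreach, ⟨-, hbD⟩, huniq⟩
    exact ⟨hacyc, hreach, fun d hd hbd ↦ hb (hbD d hd hbd ▸ hd), fun d hd ↦ (huniq d hd).2⟩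
  · rintro ⟨hacyc, hreach, hbD, huniq⟩
    exact ⟨fun hb ↦ hbD b hb .rfl, hacyc, hreach,
      ⟨fun _ ↦ trivial, fun d hd h ↦ absurd h (hbD d hd)⟩,
      fun d hd ↦ ⟨fun h ↦ absurd h.symm (hbD d hd), huniq d hd⟩⟩

theorem notMem_and_isRSF_insert_congr {b x : V} (hbx : G.Reachable b x) :
    b ∉ D ∧ IsRSF (insert b D) G ↔ x ∉ D ∧ IsRSF (insert x D) G := by
  have hiff (v : V) : G.Reachable b v ↔ G.Reachable x v := ⟨hbx.symm.trans, hbx.trans⟩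
  simp only [notMem_and_isRSF_insert_iff, hiff]

theorem isRSF_sup_edge_iff {a b d : V} (hd : d ∈ D) (hda : G.Reachable d a)
    (hab : ¬G.Reachable a b) :
    IsRSF D (G ⊔ edge a b) ↔ b ∉ D ∧ IsRSF (insert b D) G := by
  simp only [isRSF_iff (F := G ⊔ edge a b), notMem_and_isRSF_insert_iff,
    isAcyclic_add_edge_iff_of_not_reachable a b hab, reachable_sup_edge_iff]
  refine and_congr_right fun _ ↦ ⟨?_, ?_⟩
  · rintro ⟨hreach, huniq⟩
    refine ⟨fun v ↦ ?_, fun d' hd' hbd' ↦ ?_, fun d₁ hd₁ d₂ hd₂ h ↦ huniq d₁ hd₁ d₂ hd₂ (.inl h)⟩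
    · obtain ⟨d', hd', hd'v | ⟨-, hbv⟩ | ⟨-, hav⟩⟩ := hreach v
      · exact .inr ⟨d', hd', hd'v⟩
      · exact .inl hbv
      · exact .inr ⟨d, hd, hda.trans hav⟩
    · obtain rfl : d = d' := huniq d hd d' hd' (.inr (.inl ⟨hda, hbd'⟩))
      exact hab (hbd'.trans hda).symm
  · rintro ⟨hreach, hbD, huniq⟩
    refine ⟨fun v ↦ ?_, fun d₁ hd₁ d₂ hd₂ ↦ ?_⟩
    · obtain hbv | ⟨d', hd', hd'v⟩ := hreach v
      · exact ⟨d, hd, .inr (.inl ⟨hda, hbv⟩)⟩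
      · exact ⟨d', hd', .inl hd'v⟩
    · rintro (h | ⟨-, h⟩ | ⟨h, -⟩)
      · exact huniq d₁ hd₁ d₂ hd₂ h
      · exact absurd h (hbD d₂ hd₂)
      · exact absurd h.symm (hbD d₁ hd₁)

theorem IsRSF.exists_eq_sup_edge_and_isRSF_insert (hF : IsRSF D F) {e : Sym2 V}
    (he : e ∈ F.edgeSet) :
    ∃ (G : SimpleGraph V) (a b : V), e = s(a, b) ∧ F = G ⊔ edge a b ∧ ¬G.Reachable a b ∧
      b ∉ D ∧ IsRSF (insert b D) G := by
  induction e using Sym2.ind with | _ a b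
  obtain ⟨G, rfl, hab⟩ := exists_eq_sup_edge_of_isAcyclic hF.1 he
  obtain ⟨d, hd, hda⟩ := (isRSF_iff.1 hF).2.1 a
  obtain hda | hdb : G.Reachable d a ∨ G.Reachable d b := by
    rw [reachable_sup_edge_iff] at hda
    tauto
  · exact ⟨G, a, b, rfl, rfl, hab, (isRSF_sup_edge_iff hd hda hab).1 hF⟩
  · rw [edge_comm] at hF ⊢
    have hba : ¬G.Reachable b a := fun h ↦ hab h.symm
    exact ⟨G, b, a, Sym2.eq_swap, rfl, hba, (isRSF_sup_edge_iff hd hdb hba).1 hF⟩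

theorem IsRSF.sup_edge_of_insert {b x y : V} (hG : IsRSF (insert b D) G) (hb : b ∉ D)
    (hbx : G.Reachable b x) (hby : ¬G.Reachable b y) : IsRSF D (G ⊔ edge x y) := by
  obtain ⟨d, hd, hdy⟩ : ∃ d ∈ D, G.Reachable d y :=
    ((notMem_and_isRSF_insert_iff.1 ⟨hb, hG⟩).2.1 y).resolve_left hby
  have hyx : ¬G.Reachable y x := fun h ↦ hby (hbx.trans h.symm)
  rw [edge_comm, isRSF_sup_edge_iff hd hdy hyx]
  exact (notMem_and_isRSF_insert_congr hbx).1 ⟨hb, hG⟩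

end RootedSpanningForests

theorem stmt8_general {V : Type} [Fintype V] {ι : Type*}
    (w : V → V → ℝ)
    (hnonneg : ∀ u v, 0 ≤ w u v)
    (hsymm : ∀ u v, w u v = w v u)
    (D : Finset V)
    (lamstar : ℝ)
    (C : ι → List V)
    (hdep : ∀ j, ∃ d ∈ D, d ∈ C j)
    (hcov : ∀ v : V, ∃ j, v ∈ C j)
    (hwt : ∀ j, cycleWeight w (C j) ≤ lamstar)
    (F : SimpleGraph V) (hF : IsRSF D F)
    (hmin : ∀ F' : SimpleGraph V, IsRSF D F' →
      graphWeight (Sym2.lift ⟨w, hsymm⟩) F ≤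
        graphWeight (Sym2.lift ⟨w, hsymm⟩) F') :
    ∀ e ∈ F.edgeSet, Sym2.lift ⟨w, hsymm⟩ e ≤ lamstar := by
  classical
  intro e he
  obtain ⟨G, a, b, rfl, rfl, hab, hb, hG⟩ := hF.exists_eq_sup_edge_and_isRSF_insert he
  obtain ⟨j, hbj⟩ := hcov b
  obtain ⟨d, hd, hdj⟩ := hdep j
  have hbd : ¬G.Reachable b d := (notMem_and_isRSF_insert_iff.1 ⟨hb, hG⟩).2.2.1 d hd
  obtain ⟨⟨x, y⟩, hxy, hbx, hby⟩ :=
    exists_mem_zip_rotate_of_mem_of_not (P := G.Reachable b) hbj hdj .rfl hbd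
  have hadj_ab : (G ⊔ edge a b).Adj a b := he
  have hne : x ≠ y := by
    rintro rfl
    exact hby hbx
  have hnadj : ¬G.Adj x y := fun h ↦ hby (hbx.trans h.reachable)
  have hexchange := hmin _ (hG.sup_edge_of_insert hb hbx hby)
  rw [graphWeight_sup_edge _ hadj_ab.ne (mt Adj.reachable hab),
    graphWeight_sup_edge _ hne hnadj] at hexchange
  calc w a b ≤ w x y := le_of_add_le_add_right hexchange
    _ ≤ cycleWeight w (C j) := le_cycleWeight_of_mem_zip_rotate hnonneg hxy
    _ ≤ lamstar := hwt j

/-- if there is a family of cycles, each containing exactly one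
depot of `D`, covering `V`, with maximum cycle weight `λ*`, then every edge of
any minimum-weight rooted spanning forest of `(V, D)` has weight at most
`λ*`. -/
theorem stmt8 {V : Type} [Fintype V] [DecidableEq V]
    (w : V → V → ℝ)
    (hzero : ∀ v, w v v = 0)
    (hnonneg : ∀ u v, 0 ≤ w u v)
    (hsymm : ∀ u v, w u v = w v u)
    (htri : ∀ u v x, w u x ≤ w u v + w v x)
    (D : Finset V) (hD : D.Nonempty)
    (lamstar : ℝ)
    (q : ℕ) (C : Fin q → List V)
    (hnodup : ∀ j, (C j).Nodup) (hne : ∀ j, C j ≠ [])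
    (hdep : ∀ j, ((C j).toFinset ∩ D).card = 1)
    (hcov : ∀ v : V, ∃ j, v ∈ C j)
    (hwt : ∀ j, cycleWeight w (C j) ≤ lamstar)
    (F : SimpleGraph V) (hF : IsRSF D F)
    (hmin : ∀ F' : SimpleGraph V, IsRSF D F' →
      graphWeight (Sym2.lift ⟨w, hsymm⟩) F ≤
        graphWeight (Sym2.lift ⟨w, hsymm⟩) F') :
    ∀ e ∈ F.edgeSet, Sym2.lift ⟨w, hsymm⟩ e ≤ lamstar := by
  have hmeets (j : Fin q) : ∃ d ∈ D, d ∈ C j := by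
    simpa [Finset.Nonempty, and_comm] using Finset.one_le_card.1 (hdep j).ge
  exact stmt8_general w hnonneg hsymm D lamstar C hmeets hcov hwt F hF hmin
end

section
/- Let G' be the complete graph on vertex set V' = (V \ D) ∪ {d̂}, where d̂ is a new vertex, with edge weights w'(u, v) = w(u, v) for u, v ∈ V \ D and w'(d̂, v) = min_{d ∈ D} w(d, v) for v ∈ V \ D. Then the minimum total edge weight of a rooted spanning forest of (V, D) equals the minimum total edge weight of a spanning tree of G'. -/
/-!
Contract all depots to the single vertex `d̂`. A graph on `V` is a rooted spanning forest exactly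
when the contraction maps its edges bijectively onto the edges of a spanning tree of the contracted
graph. Indeed, if it does, then a nontrivial trail between two depots, or a cycle, would become a
nontrivial closed trail of the tree. Conversely, a rooted spanning forest is minimal among the
graphs linking every vertex to a depot, so it coincides with any lift, inside it, of a spanning
tree of its contraction. As `w'` is the least weight of an edge in each fibre of the contraction,
contracting a forest does not increase its weight, while lifting every tree edge to a lightest
edge of its fibre preserves the weight.
-/

open Set SimpleGraph

section Weight

variable {V W : Type} [Fintype V] [Fintype W]

theorem graphWeight_mono {wE wE' : Sym2 V → ℝ} {F : SimpleGraph V}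
    (h : ∀ e ∈ F.edgeSet, wE e ≤ wE' e) : graphWeight wE F ≤ graphWeight wE' F :=
  Finset.sum_le_sum fun e he => h e (F.edgeSet.toFinite.mem_toFinset.mp he)

theorem graphWeight_congr {wE wE' : Sym2 V → ℝ} {F : SimpleGraph V}
    (h : ∀ e ∈ F.edgeSet, wE e = wE' e) : graphWeight wE F = graphWeight wE' F :=
  Finset.sum_congr rfl fun e he => h e (F.edgeSet.toFinite.mem_toFinset.mp he)

theorem graphWeight_comp_of_bijOn {f : Sym2 V → Sym2 W} {F : SimpleGraph V} {T : SimpleGraph W}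
    (h : BijOn f F.edgeSet T.edgeSet) (wE : Sym2 W → ℝ) :
    graphWeight (wE ∘ f) F = graphWeight wE T :=
  Finset.sum_nbij f (by simpa using! h.mapsTo) (by simpa using h.injOn)
    (by simpa using h.surjOn) fun _ _ => rfl

end Weight

section Map

variable {V W : Type*} {F : SimpleGraph V} {T : SimpleGraph W}

theorem reachable_map (f : V → W) {u v : V} (h : F.Reachable u v) :
    (F.map f).Reachable (f u) (f v) := by
  obtain ⟨p⟩ := h
  induction p with
  | nil => rfl
  | @cons u v _ huv _ ih =>
    by_cases hf : f u = f v
    · rwa [hf]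
    · exact (map_adj_apply' huv hf).reachable.trans ih

theorem le_map_iff_surjOn_edgeSet {f : V → W} :
    T ≤ F.map f ↔ SurjOn (Sym2.map f) F.edgeSet T.edgeSet := by
  constructor
  · intro h e he
    induction e with
    | _ x y =>
      obtain ⟨-, a, b, hab, rfl, rfl⟩ := h he
      exact ⟨s(a, b), hab, rfl⟩
  · intro h x y hxy
    obtain ⟨e, he, hexy⟩ := h (show s(x, y) ∈ T.edgeSet from hxy)
    induction e with
    | _ a b =>
      obtain ⟨rfl, rfl⟩ | ⟨rfl, rfl⟩ := Sym2.eq_iff.mp hexy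
      · exact map_adj_apply' he hxy.ne
      · exact (map_adj_apply' he hxy.ne').symm

theorem exists_bijOn_edgeSet_of_surjOn {f : V → W} {s : Set (Sym2 V)}
    (h : SurjOn (Sym2.map f) s T.edgeSet) :
    ∃ F : SimpleGraph V, F.edgeSet ⊆ s ∧ BijOn (Sym2.map f) F.edgeSet T.edgeSet := by
  obtain ⟨t, hts, ht⟩ := h.exists_bijOn_subset
  have htF : (fromEdgeSet t).edgeSet = t := by
    rw [edgeSet_fromEdgeSet, sdiff_eq_left, Set.disjoint_left]
    exact fun e he hdiag => T.not_isDiag_of_mem_edgeSet (ht.mapsTo he) hdiag.map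
  exact ⟨fromEdgeSet t, htF.symm ▸ hts, htF.symm ▸ ht⟩

theorem nil_of_isTrail_of_map_eq (f : F →g T) (hT : T.IsAcyclic)
    (hf : InjOn (Sym2.map f) F.edgeSet) {u v : V} {p : F.Walk u v} (hp : p.IsTrail)
    (huv : f u = f v) : p.Nil := by
  let q : T.Walk (f u) (f u) := (p.map f).copy rfl huv.symm
  have hq : q.IsTrail := by
    rw [Walk.isTrail_copy, Walk.isTrail_def, Walk.edges_map]
    exact hp.edges_nodup.map_on fun _ he _ he' => hf (p.edges_subset_edgeSet he)
      (p.edges_subset_edgeSet he')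
  have hnil : q.Nil := Walk.isPath_iff_nil.mp ((hT.isPath_iff_isTrail q).mpr hq)
  simpa [q] using hnil

end Map

section LinksToDepots

/-- Every vertex is linked to some depot: the analogue, before contracting the depots, of
connectedness. Rooted spanning forests are minimal with this property. -/
def LinksToDepots {V : Type*} (D : Finset V) (F : SimpleGraph V) : Prop :=
  ∀ v, ∃ d ∈ D, F.Reachable v d

variable {V : Type} {D : Finset V} {F : SimpleGraph V}

theorem IsRSF.linksToDepots (hF : IsRSF D F) : LinksToDepots D F := by
  intro v
  obtain ⟨d, ⟨hd, hdv⟩, -⟩ := hF.2 (F.connectedComponentMk v)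
  exact ⟨d, hd, (ConnectedComponent.exact hdv).symm⟩

theorem IsRSF.eq_of_mem_of_reachable (hF : IsRSF D F) {d d' : V} (hd : d ∈ D) (hd' : d' ∈ D)
    (h : F.Reachable d d') : d = d' :=
  (hF.2 (F.connectedComponentMk d')).unique ⟨hd, ConnectedComponent.sound h⟩ ⟨hd', rfl⟩

theorem IsRSF.minimal_linksToDepots (hF : IsRSF D F) : Minimal (LinksToDepots D) F := by
  refine ⟨hF.linksToDepots, fun F' hF' hle a b hab => ?_⟩
  by_contra hab'
  obtain ⟨d, hd, had⟩ := hF' a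
  obtain ⟨d', hd', hbd'⟩ := hF' b
  have hdd' : d = d' := hF.eq_of_mem_of_reachable hd hd'
    ((had.mono hle).symm.trans (hab.reachable.trans (hbd'.mono hle)))
  have hdel : F' ≤ F.deleteEdges {s(a, b)} := by
    intro u v huv
    refine deleteEdges_adj.mpr ⟨hle huv, fun he => hab' ?_⟩
    rwa [← mem_edgeSet, ← mem_singleton_iff.mp he]
  exact isBridge_iff.mp (isAcyclic_iff_forall_adj_isBridge.mp hF.1 hab)
    ((had.trans (hdd' ▸ hbd'.symm)).mono hdel)

end LinksToDepots

section Contraction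

variable {V : Type*} [DecidableEq V] {D : Finset V} {F : SimpleGraph V}

/-- The map `V → (V \ D) ∪ {d̂}` merging all depots into `d̂`, which is encoded as `none`. -/
def contractDepots (D : Finset V) (v : V) : Option {v : V // v ∉ D} :=
  if h : v ∈ D then none else some ⟨v, h⟩

theorem contractDepots_of_mem {v : V} (h : v ∈ D) : contractDepots D v = none :=
  dif_pos h

theorem contractDepots_of_notMem {v : V} (h : v ∉ D) : contractDepots D v = some ⟨v, h⟩ :=
  dif_neg h

theorem contractDepots_eq_iff {u v : V} :
    contractDepots D u = contractDepots D v ↔ u = v ∨ u ∈ D ∧ v ∈ D := by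
  unfold contractDepots
  grind

theorem contractDepots_preimage_none : contractDepots D ⁻¹' {none} = D := by
  ext v
  simp [contractDepots]

theorem contractDepots_preimage_some (v : {v : V // v ∉ D}) :
    contractDepots D ⁻¹' {some v} = {v.1} := by
  ext u
  simp only [contractDepots, mem_preimage, mem_singleton_iff]
  grind

theorem exists_mem_reachable_of_reachable_map_contractDepots {v : V}
    (h : (F.map (contractDepots D)).Reachable (contractDepots D v) none) :
    ∃ d ∈ D, F.Reachable v d := by
  rw [reachable_iff_reflTransGen] at h
  generalize hx : contractDepots D v = x at h
  induction h using Relation.ReflTransGen.head_induction_on generalizing v with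
  | refl =>
    rw [← mem_singleton_iff, ← mem_preimage, contractDepots_preimage_none] at hx
    exact ⟨v, hx, .rfl⟩
  | head hxy _ ih =>
    obtain ⟨-, a, b, hab, rfl, rfl⟩ := hxy
    obtain rfl | ⟨hv, -⟩ := contractDepots_eq_iff.mp hx
    · obtain ⟨d, hd, hbd⟩ := ih rfl
      exact ⟨d, hd, hab.reachable.trans hbd⟩
    · exact ⟨v, hv, .rfl⟩

theorem connected_map_contractDepots_iff :
    (F.map (contractDepots D)).Connected ↔ LinksToDepots D F := by
  refine ⟨fun h v => exists_mem_reachable_of_reachable_map_contractDepots (h _ _), fun h => ?_⟩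
  have hnone : ∀ x, (F.map (contractDepots D)).Reachable x none := by
    rintro (_ | ⟨v, hv⟩)
    · rfl
    · obtain ⟨d, hd, hvd⟩ := h v
      simpa only [contractDepots_of_mem hd, contractDepots_of_notMem hv]
        using reachable_map (contractDepots D) hvd
  exact ⟨fun x y => (hnone x).trans (hnone y).symm⟩

theorem linksToDepots_of_surjOn_edgeSet {T : SimpleGraph (Option {v : V // v ∉ D})}
    (hT : T.Connected) (h : SurjOn (Sym2.map (contractDepots D)) F.edgeSet T.edgeSet) :
    LinksToDepots D F :=
  connected_map_contractDepots_iff.mp (hT.mono (le_map_iff_surjOn_edgeSet.mpr h))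

end Contraction

section EdgeBijection

variable {V : Type} [DecidableEq V] {D : Finset V} {F : SimpleGraph V}

theorem IsRSF.exists_isTree_bijOn_edgeSet (hF : IsRSF D F) :
    ∃ T : SimpleGraph (Option {v : V // v ∉ D}), T.IsTree ∧
      BijOn (Sym2.map (contractDepots D)) F.edgeSet T.edgeSet := by
  obtain ⟨T, hTle, hT⟩ :=
    (connected_map_contractDepots_iff.mpr hF.linksToDepots).exists_isTree_le
  obtain ⟨F', hF'F, hF'⟩ :=
    exists_bijOn_edgeSet_of_surjOn (le_map_iff_surjOn_edgeSet.mp hTle)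
  have hlink : LinksToDepots D F' := linksToDepots_of_surjOn_edgeSet hT.connected hF'.surjOn
  have hF'_eq : F' = F := hF.minimal_linksToDepots.eq_of_le hlink (edgeSet_subset_edgeSet.mp hF'F)
  exact ⟨T, hT, hF'_eq ▸ hF'⟩

theorem isRSF_of_bijOn_edgeSet {T : SimpleGraph (Option {v : V // v ∉ D})} (hT : T.IsTree)
    (h : BijOn (Sym2.map (contractDepots D)) F.edgeSet T.edgeSet) : IsRSF D F := by
  let f : F →g T :=
    ⟨contractDepots D, fun {a b} hab => h.mapsTo (show s(a, b) ∈ F.edgeSet from hab)⟩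
  have hnil {u v : V} {p : F.Walk u v} (hp : p.IsTrail) (huv : f u = f v) : p.Nil :=
    nil_of_isTrail_of_map_eq f hT.isAcyclic h.injOn hp huv
  refine ⟨fun v p hp => hp.ne_nil (Walk.eq_nil_iff_nil.mpr (hnil hp.isTrail rfl)),
    ConnectedComponent.ind fun v => ?_⟩
  obtain ⟨d, hd, hvd⟩ := linksToDepots_of_surjOn_edgeSet hT.connected h.surjOn v
  refine ⟨d, ⟨hd, ConnectedComponent.sound hvd.symm⟩, fun d' ⟨hd', hd'v⟩ => ?_⟩
  obtain ⟨p, hp⟩ := ((ConnectedComponent.exact hd'v).trans hvd).exists_isPath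
  exact (hnil hp.isTrail (contractDepots_eq_iff.mpr (.inr ⟨hd', hd⟩))).eq

end EdgeBijection

section ContractedWeight

theorem lift_image_preimage_map {V W α : Type*} (f : V → W) (w : V → V → α)
    (hsymm : ∀ u v, w u v = w v u) (x y : W) :
    Sym2.lift ⟨w, hsymm⟩ '' (Sym2.map f ⁻¹' {s(x, y)}) =
      image2 w (f ⁻¹' {x}) (f ⁻¹' {y}) := by
  ext r
  constructor
  · rintro ⟨e, he, rfl⟩
    induction e with
    | _ a b =>
      obtain ⟨hx, hy⟩ | ⟨hy, hx⟩ := Sym2.eq_iff.mp he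
      · exact ⟨a, hx, b, hy, rfl⟩
      · exact ⟨b, hx, a, hy, hsymm b a⟩
  · rintro ⟨a, rfl, b, rfl, rfl⟩
    exact ⟨s(a, b), rfl, rfl⟩

/-- `wE'` gives every edge of the contracted graph the least weight under `wE` of the edges
contracting to it. The diagonal is excluded: on it `Sym2` has loops, which are not edges. -/
def IsContractedWeight {V α : Type*} [DecidableEq V] [Preorder α] (D : Finset V)
    (wE : Sym2 V → α) (wE' : Sym2 (Option {v : V // v ∉ D}) → α) : Prop :=
  ∀ e, ¬ e.IsDiag → IsLeast (wE '' (Sym2.map (contractDepots D) ⁻¹' {e})) (wE' e)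

theorem isContractedWeight_lift {V α : Type*} [DecidableEq V] [LinearOrder α] {D : Finset V}
    {w : V → V → α} (hsymm : ∀ u v, w u v = w v u) (hD : D.Nonempty)
    {w' : Option {v : V // v ∉ D} → Option {v : V // v ∉ D} → α}
    (hw'symm : ∀ a b, w' a b = w' b a)
    (hw'some : ∀ u v : {v : V // v ∉ D}, w' (some u) (some v) = w u.1 v.1)
    (hw'none : ∀ v : {v : V // v ∉ D}, w' none (some v) = D.inf' hD fun d => w d v.1) :
    IsContractedWeight D (Sym2.lift ⟨w, hsymm⟩) (Sym2.lift ⟨w', hw'symm⟩) := by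
  have hnone : ∀ v : {v : V // v ∉ D},
      IsLeast (image2 w (contractDepots D ⁻¹' {none}) (contractDepots D ⁻¹' {some v}))
        (w' none (some v)) := by
    intro v
    rw [contractDepots_preimage_none, contractDepots_preimage_some, image2_singleton_right,
      hw'none]
    obtain ⟨d, hd, hmin⟩ := D.exists_mem_eq_inf' hD fun d => w d v
    exact ⟨⟨d, hd, hmin.symm⟩, forall_mem_image.mpr fun d hd => D.inf'_le (fun d => w d v) hd⟩
  intro e he
  induction e with
  | _ x y =>
    rcases x with _ | u <;> rcases y with _ | v
    · exact absurd (Sym2.mk_isDiag_iff.mpr rfl) he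
    · rw [lift_image_preimage_map]
      exact hnone v
    · rw [Sym2.eq_swap, lift_image_preimage_map]
      exact hnone u
    · rw [lift_image_preimage_map, contractDepots_preimage_some, contractDepots_preimage_some,
        image2_singleton, ← hw'some]
      exact isLeast_singleton

variable {V : Type} [Fintype V] [DecidableEq V] {D : Finset V} {wE : Sym2 V → ℝ}
  {wE' : Sym2 (Option {v : V // v ∉ D}) → ℝ}

theorem IsRSF.exists_isTree_graphWeight_le (hw : IsContractedWeight D wE wE')
    {F : SimpleGraph V} (hF : IsRSF D F) :
    ∃ T : SimpleGraph (Option {v : V // v ∉ D}), T.IsTree ∧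
      graphWeight wE' T ≤ graphWeight wE F := by
  obtain ⟨T, hT, h⟩ := hF.exists_isTree_bijOn_edgeSet
  refine ⟨T, hT, ?_⟩
  rw [← graphWeight_comp_of_bijOn h]
  exact graphWeight_mono fun e he =>
    (hw _ (T.not_isDiag_of_mem_edgeSet (h.mapsTo he))).2 ⟨e, rfl, rfl⟩

theorem exists_isRSF_graphWeight_eq (hw : IsContractedWeight D wE wE')
    {T : SimpleGraph (Option {v : V // v ∉ D})} (hT : T.IsTree) :
    ∃ F : SimpleGraph V, IsRSF D F ∧ graphWeight wE F = graphWeight wE' T := by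
  have hsurj : SurjOn (Sym2.map (contractDepots D))
      {e | wE e = wE' (e.map (contractDepots D))} T.edgeSet := by
    intro e he
    obtain ⟨e', rfl, he'⟩ := (hw e (T.not_isDiag_of_mem_edgeSet he)).1
    exact ⟨e', he', rfl⟩
  obtain ⟨F, hFw, h⟩ := exists_bijOn_edgeSet_of_surjOn hsurj
  refine ⟨F, isRSF_of_bijOn_edgeSet hT h, ?_⟩
  rw [← graphWeight_comp_of_bijOn h]
  exact graphWeight_congr fun e he => hFw he

theorem exists_isLeast_graphWeight_isRSF_isTree (hw : IsContractedWeight D wE wE') :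
    ∃ x, IsLeast {x : ℝ | ∃ F : SimpleGraph V, IsRSF D F ∧ graphWeight wE F = x} x ∧
      IsLeast {x : ℝ | ∃ T : SimpleGraph (Option {v : V // v ∉ D}),
        T.IsTree ∧ graphWeight wE' T = x} x := by
  obtain ⟨T₀, -, hT₀⟩ := (connected_top (V := Option {v : V // v ∉ D})).exists_isTree_le
  obtain ⟨T, hT, hmin⟩ := Set.exists_min_image
    {T : SimpleGraph (Option {v : V // v ∉ D}) | T.IsTree} (graphWeight wE') (toFinite _) ⟨T₀, hT₀⟩
  refine ⟨graphWeight wE' T, ⟨exists_isRSF_graphWeight_eq hw hT, ?_⟩, ⟨T, hT, rfl⟩, ?_⟩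
  · rintro _ ⟨F, hF, rfl⟩
    obtain ⟨T', hT', hle⟩ := hF.exists_isTree_graphWeight_le hw
    exact (hmin T' hT').trans hle
  · rintro _ ⟨T', hT', rfl⟩
    exact hmin T' hT'

end ContractedWeight

theorem stmt9_general {V : Type} [Fintype V] [DecidableEq V]
    (w : V → V → ℝ)
    (hsymm : ∀ u v, w u v = w v u)
    (D : Finset V) (hD : D.Nonempty)
    (w' : Option {v : V // v ∉ D} → Option {v : V // v ∉ D} → ℝ)
    (hw'symm : ∀ a b, w' a b = w' b a)
    (hw'some : ∀ u v : {v : V // v ∉ D}, w' (some u) (some v) = w u.1 v.1)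
    (hw'none : ∀ v : {v : V // v ∉ D},
      w' none (some v) = D.inf' hD fun d => w d v.1) :
    ∃ x, IsLeast {x : ℝ | ∃ F : SimpleGraph V,
        IsRSF D F ∧ graphWeight (Sym2.lift ⟨w, hsymm⟩) F = x} x ∧
      IsLeast {x : ℝ | ∃ T : SimpleGraph (Option {v : V // v ∉ D}),
        T.IsTree ∧ graphWeight (Sym2.lift ⟨w', hw'symm⟩) T = x} x :=
  exists_isLeast_graphWeight_isRSF_isTree
    (isContractedWeight_lift hsymm hD hw'symm hw'some hw'none)

/-- let `G'` be the complete graph on `V' = (V \ D) ∪ {d̂}` (here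
`V'` is modelled as `Option {v : V // v ∉ D}`, with `none` playing the role of
the merged depot `d̂`), with weights `w'` agreeing with `w` on `V \ D` and
`w'(d̂, v) = min_{d ∈ D} w(d, v)`.  Then the minimum weight of a rooted
spanning forest of `(V, D)` equals the minimum weight of a spanning tree of
`G'`. -/
theorem stmt9 {V : Type} [Fintype V] [DecidableEq V]
    (w : V → V → ℝ)
    (hzero : ∀ v, w v v = 0)
    (hnonneg : ∀ u v, 0 ≤ w u v)
    (hsymm : ∀ u v, w u v = w v u)
    (htri : ∀ u v x, w u x ≤ w u v + w v x)
    (D : Finset V) (hD : D.Nonempty)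
    (w' : Option {v : V // v ∉ D} → Option {v : V // v ∉ D} → ℝ)
    (hw'symm : ∀ a b, w' a b = w' b a)
    (hw'some : ∀ u v : {v : V // v ∉ D}, w' (some u) (some v) = w u.1 v.1)
    (hw'none : ∀ v : {v : V // v ∉ D},
      w' none (some v) = D.inf' hD fun d => w d v.1) :
    sInf {x : ℝ | ∃ F : SimpleGraph V,
        IsRSF D F ∧ graphWeight (Sym2.lift ⟨w, hsymm⟩) F = x}
      = sInf {x : ℝ | ∃ T : SimpleGraph (Option {v : V // v ∉ D}),
          T.IsTree ∧ graphWeight (Sym2.lift ⟨w', hw'symm⟩) T = x} := by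
  obtain ⟨x, hF, hT⟩ := stmt9_general w hsymm D hD w' hw'symm hw'some hw'none
  rw [hF.csInf_eq, hT.csInf_eq]
end

section
/- Let λ and λ* be reals with λ ≥ λ* > 0, let K be a nonnegative integer, and let w_1, …, w_p be reals with w_i ≥ λ* for every i and Σ_{i=1}^{p} w_i ≤ K·λ*. Then Σ_{i : w_i ≥ 2λ} ⌊w_i / λ⌋ + |{ i : w_i < 2λ }| ≤ K. -/
/-!
Measure weights in units of `λ*`. Each `w i / λ*` is at least `⌊w i / λ⌋`, because `λ* ≤ λ`, and
at least `1`, because `λ* ≤ w i`. So however the indices are divided between these two bounds,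
the total is at most `(∑ i, w i) / λ* ≤ K`.
-/

section FloorField

open scoped Finset

variable {k : Type*} [Field k] [LinearOrder k] [IsStrictOrderedRing k] [FloorRing k]

lemma floor_div_le_div_of_le {w lam lamstar : k} (hw : 0 ≤ w) (hpos : 0 < lamstar)
    (hll : lamstar ≤ lam) : (⌊w / lam⌋ : k) ≤ w / lamstar :=
  calc (⌊w / lam⌋ : k) ≤ w / lam := Int.floor_le _
    _ ≤ w / lamstar := div_le_div_of_nonneg_left hw hpos hll

variable {ι : Type*} {s : Finset ι} {P : ι → Prop} [DecidablePred P] {w : ι → k} {lam lamstar : k}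

lemma sum_floor_div_add_card_le_sum_div (hll : lamstar ≤ lam) (hpos : 0 < lamstar)
    (hP : ∀ i ∈ s, P i → 0 ≤ w i) (hnP : ∀ i ∈ s, ¬ P i → lamstar ≤ w i) :
    ∑ i ∈ s with P i, (⌊w i / lam⌋ : k) + (#{i ∈ s | ¬ P i} : k)
      ≤ (∑ i ∈ s, w i) / lamstar := by
  have hfloor : ∑ i ∈ s with P i, (⌊w i / lam⌋ : k) ≤ ∑ i ∈ s with P i, w i / lamstar := by
    refine Finset.sum_le_sum fun i hi => ?_
    obtain ⟨his, hPi⟩ := Finset.mem_filter.1 hi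
    exact floor_div_le_div_of_le (hP i his hPi) hpos hll
  have hcard : (#{i ∈ s | ¬ P i} : k) ≤ ∑ i ∈ s with ¬ P i, w i / lamstar := by
    rw [Finset.cast_card]
    refine Finset.sum_le_sum fun i hi => ?_
    obtain ⟨his, hPi⟩ := Finset.mem_filter.1 hi
    exact (one_le_div hpos).2 (hnP i his hPi)
  calc ∑ i ∈ s with P i, (⌊w i / lam⌋ : k) + (#{i ∈ s | ¬ P i} : k)
      ≤ ∑ i ∈ s with P i, w i / lamstar + ∑ i ∈ s with ¬ P i, w i / lamstar :=
        add_le_add hfloor hcard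
    _ = ∑ i ∈ s, w i / lamstar := Finset.sum_filter_add_sum_filter_not s P _
    _ = (∑ i ∈ s, w i) / lamstar := (Finset.sum_div s w lamstar).symm

theorem stmt11_general {K : ℤ} (hll : lamstar ≤ lam) (hpos : 0 < lamstar)
    (hP : ∀ i ∈ s, P i → 0 ≤ w i) (hnP : ∀ i ∈ s, ¬ P i → lamstar ≤ w i)
    (hsum : ∑ i ∈ s, w i ≤ (K : k) * lamstar) :
    ∑ i ∈ s with P i, ⌊w i / lam⌋ + (#{i ∈ s | ¬ P i} : ℤ) ≤ K := by
  have hK : (∑ i ∈ s, w i) / lamstar ≤ (K : k) := (div_le_iff₀ hpos).2 hsum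
  exact_mod_cast (sum_floor_div_add_card_le_sum_div hll hpos hP hnP).trans hK

end FloorField

/-- arithmetic core of the paper's Lemma 4: if `λ ≥ λ* > 0`,
`K` is a nonnegative integer, and `w_1, …, w_p` are reals with `w_i ≥ λ*` for
every `i` and `Σ w_i ≤ K λ*`, then
`Σ_{i : w_i ≥ 2λ} ⌊w_i/λ⌋ + #{i : w_i < 2λ} ≤ K`. -/
theorem stmt11 (lam lamstar : ℝ) (hll : lamstar ≤ lam) (hpos : 0 < lamstar)
    (K : ℕ) (p : ℕ) (wts : Fin p → ℝ)
    (hw : ∀ i, lamstar ≤ wts i)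
    (hsum : ∑ i, wts i ≤ (K : ℝ) * lamstar) :
    (∑ i ∈ Finset.univ.filter (fun i => 2 * lam ≤ wts i), ⌊wts i / lam⌋)
        + ((Finset.univ.filter (fun i => wts i < 2 * lam)).card : ℤ)
      ≤ (K : ℤ) := by
  simpa only [not_le] using stmt11_general (P := fun i => 2 * lam ≤ wts i) (K := K) hll hpos
    (fun i _ _ => hpos.le.trans (hw i)) (fun i _ _ => hw i) (by exact_mod_cast hsum)
end
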